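/- Jump relation for the derivative of the E-potential across the moving boundary: Let T > 0, let φ : (0,T] → ℝ be such that t ↦ t^{1−α_m} φ(t) extends to a continuous function on [0,T], and let s : [0,T] → ℝ satisfy |s(t) − s(τ)| ≤ |t − τ|^β for all t, τ ∈ [0,T], for some β > α_m/2. Then for each t ∈ (0,T]: the one-sided limits of the derivative of the potential satisfy lim_{x → s(t)⁻} (∂/∂x) ∫₀^t φ(τ) E(x − s(τ), t − τ) dτ = (1/2) φ(t) + ∫₀^t φ(τ) E_x(s(t) − s(τ), t − τ) dτ, and lim_{x → s(t)⁺} (∂/∂x) ∫₀^t φ(τ) E(x − s(τ), t − τ) dτ = −(1/2) φ(t) + ∫₀^t φ(τ) E_x(s(t) − s(τ), t − τ) dτ. -/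

import Mathlib

open MeasureTheory Real Filter Set Topology intervalIntegral

/-- The Wright function `W(z; -β, δ) = ∑ z^k/(k! Γ(δ - βk))`, with `1/Γ` the
entire reciprocal Gamma function (here `Real.Gamma` vanishes at nonpositive
integers, so division gives the correct value `0`). -/
noncomputable def wrightW (β δ z : ℝ) : ℝ :=
  ∑' k : ℕ, z ^ k / (k.factorial * Real.Gamma (δ - β * k))

/-- Laplace convolution on `(0, ∞)`. -/
noncomputable def laplaceConv (f g : ℝ → ℝ) : ℝ → ℝ :=
  fun t => ∫ τ in (0:ℝ)..t, f τ * g (t - τ)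

/-- Iterated Laplace convolution `h₀ ∗ h₁ ∗ ⋯ ∗ hₙ`. -/
noncomputable def iterConv : (n : ℕ) → (Fin (n + 1) → ℝ → ℝ) → ℝ → ℝ
  | 0, h => h 0
  | n + 1, h => laplaceConv (iterConv n (fun i => h i.castSucc)) (h (Fin.last (n + 1)))

/-- `S^μ_m(t; -ℓ₁, …, -ℓ_m; -α₁, …, -α_m)` with the decomposition `μ₁ = μ`,
`μ_j = 0` for `j ≥ 2`: the Laplace convolution of
`h_j(t) = t^{μ_j - 1} W(-ℓ_j t^{-α_j}; -α_j, μ_j)`.  Indices run over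
`Fin (n+1)`, i.e. the number of terms is `m = n + 1 ≥ 1`. -/
noncomputable def Sconv (n : ℕ) (μ : ℝ) (α ℓ : Fin (n + 1) → ℝ) : ℝ → ℝ :=
  iterConv n (fun j t =>
    t ^ ((if j = 0 then μ else 0) - 1) *
      wrightW (α j) (if j = 0 then μ else 0) (-(ℓ j) * t ^ (-(α j))))

/-- `Γ^μ₁(x,t)`. -/
noncomputable def Gam1 (n : ℕ) (α lam : Fin (n + 1) → ℝ) (μ x t : ℝ) : ℝ :=
  (4 * Real.pi) ^ (-(1/2 : ℝ)) *
    ∫ p in Set.Ioi (0:ℝ),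
      p ^ (-(1/2 : ℝ)) * Real.exp (-(|x| ^ 2) / (4 * p)) *
        Sconv n μ α (fun j => lam j * p) t

/-- The kernel `E(x,t) = Γ⁰₁(x,t)`. -/
noncomputable def kerE (n : ℕ) (α lam : Fin (n + 1) → ℝ) (x t : ℝ) : ℝ :=
  Gam1 n α lam 0 x t

/-- `E_x`, the spatial derivative of `E`. -/
noncomputable def kerEx (n : ℕ) (α lam : Fin (n + 1) → ℝ) (x t : ℝ) : ℝ :=
  deriv (fun y => kerE n α lam y t) x

/-- `E_xx`, the second spatial derivative of `E`. -/
noncomputable def kerExx (n : ℕ) (α lam : Fin (n + 1) → ℝ) (x t : ℝ) : ℝ :=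
  deriv (fun y => kerEx n α lam y t) x

/-- The kernel `Z(x,t) = ∑ₖ λₖ Γ^{1-αₖ}₁(x,t)`. -/
noncomputable def kerZ (n : ℕ) (α lam : Fin (n + 1) → ℝ) (x t : ℝ) : ℝ :=
  ∑ k : Fin (n + 1), lam k * Gam1 n α lam (1 - α k) x t

/-- `Z_x`, the spatial derivative of `Z`. -/
noncomputable def kerZx (n : ℕ) (α lam : Fin (n + 1) → ℝ) (x t : ℝ) : ℝ :=
  deriv (fun y => kerZ n α lam y t) x

/-- `Z_xx`, the second spatial derivative of `Z`. -/
noncomputable def kerZxx (n : ℕ) (α lam : Fin (n + 1) → ℝ) (x t : ℝ) : ℝ :=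
  deriv (fun y => kerZx n α lam y t) x

/-!
`E(x, t)` is the heat kernel in `(x, p)` integrated against the densities `f p t`, where `f p` is
the convolution of the functions `t⁻¹ W(-λⱼ p t^{-αⱼ}; -αⱼ, 0)`. Writing `W(-y; -α, 0)` as a Hankel
contour integral, with the contour turned into two rays, gives the decay of each factor in both
`p` and `t`, and letting the exponent of its Mellin transform tend to `0` gives its total mass `1`.

Since each `f p` has mass `1`, `∫₀^∞ E_x(x, r) dr = ∓1/2` for `±x > 0`, while the mass of
`E_x(x, ·)` concentrates at the lag `r = 0` as `x → 0`. So on a boundary that is frozen at `s(t)`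
the potential of `φ` jumps by `∓φ(t)/2`. The error made by freezing the boundary is governed by
the difference `E_x(x - s(τ), t - τ) - E_x(x - s(t), t - τ)`, which `β > α_m/2` makes integrable
uniformly in `x`; dominated convergence then produces the direct value of the integral.
-/

theorem integrableOn_rpow_mul_exp_neg_mul {s c : ℝ} (hs : -1 < s) (hc : 0 < c) :
    IntegrableOn (fun t : ℝ => t ^ s * Real.exp (-(c * t))) (Ioi 0) := by
  simpa using integrableOn_rpow_mul_exp_neg_mul_rpow hs one_pos hc

theorem norm_cexp_neg_mul_ofReal (z : ℂ) (t : ℝ) :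
    ‖Complex.exp (-(z * t))‖ = Real.exp (-(z.re * t)) := by
  simp [Complex.norm_exp]

theorem differentiableAt_integral_cpow_mul_cexp_neg_mul {a z : ℂ} (ha : 0 < a.re)
    (hz : 0 < z.re) :
    DifferentiableAt ℂ
      (fun z => ∫ t in Ioi (0 : ℝ), (t : ℂ) ^ (a - 1) * Complex.exp (-(z * t))) z := by
  have hnhds : {w : ℂ | z.re / 2 < w.re} ∈ 𝓝 z :=
    (isOpen_lt continuous_const Complex.continuous_re).mem_nhds (half_lt_self hz)
  have hmeas (w : ℂ) : AEStronglyMeasurable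
      (fun t : ℝ => (t : ℂ) ^ (a - 1) * Complex.exp (-(w * t))) (volume.restrict (Ioi 0)) := by
    fun_prop
  have hnorm {t : ℝ} (ht : 0 < t) (w : ℂ) :
      ‖(t : ℂ) ^ (a - 1) * Complex.exp (-(w * t))‖ = t ^ (a.re - 1) * Real.exp (-(w.re * t)) := by
    rw [norm_mul, norm_cexp_neg_mul_ofReal, Complex.norm_cpow_eq_rpow_re_of_pos ht]
    simp
  refine (hasDerivAt_integral_of_dominated_loc_of_deriv_le
    (bound := fun t : ℝ => t ^ a.re * Real.exp (-(z.re / 2 * t)))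
    (F' := fun w (t : ℝ) => (t : ℂ) ^ (a - 1) * Complex.exp (-(w * t)) * -t) hnhds
    (Eventually.of_forall hmeas) ?_ (by fun_prop) ?_
    (integrableOn_rpow_mul_exp_neg_mul (by linarith) (half_pos hz)) ?_).2.differentiableAt
  · refine (integrableOn_rpow_mul_exp_neg_mul (s := a.re - 1) (by linarith) hz).mono' (hmeas z) ?_
    filter_upwards [ae_restrict_mem measurableSet_Ioi] with t ht
    exact (hnorm ht z).le
  · filter_upwards [ae_restrict_mem measurableSet_Ioi] with t (ht : 0 < t) w (hw : _ < _)
    rw [norm_mul, hnorm ht, norm_neg, Complex.norm_of_nonneg ht.le, mul_right_comm,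
      ← rpow_add_one ht.ne', sub_add_cancel]
    gcongr
  · refine ae_of_all _ fun t w _ => ?_
    simpa [mul_assoc] using
      (((hasDerivAt_id w).mul_const (t : ℂ)).neg.cexp).const_mul ((t : ℂ) ^ (a - 1))

theorem integral_cpow_mul_cexp_neg_mul_Ioi {a z : ℂ} (ha : 0 < a.re) (hz : 0 < z.re) :
    ∫ t in Ioi (0 : ℝ), (t : ℂ) ^ (a - 1) * Complex.exp (-(z * t)) =
      z ^ (-a) * Complex.Gamma a := by
  set U : Set ℂ := {w | 0 < w.re}
  have hU : IsOpen U := isOpen_lt continuous_const Complex.continuous_re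
  have hleft : AnalyticOnNhd ℂ
      (fun z => ∫ t in Ioi (0 : ℝ), (t : ℂ) ^ (a - 1) * Complex.exp (-(z * t))) U :=
    DifferentiableOn.analyticOnNhd (fun _ hw =>
      (differentiableAt_integral_cpow_mul_cexp_neg_mul ha hw).differentiableWithinAt) hU
  have hright : AnalyticOnNhd ℂ (fun z : ℂ => z ^ (-a) * Complex.Gamma a) U :=
    DifferentiableOn.analyticOnNhd (fun w (hw : 0 < w.re) => ((differentiableAt_id.cpow_const
      (Or.inl hw : w ∈ Complex.slitPlane)).mul_const _).differentiableWithinAt) hU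
  refine hleft.eqOn_of_preconnected_of_frequently_eq hright
    (convex_halfSpace_re_gt 0).isPreconnected (z₀ := ((1 : ℝ) : ℂ)) (by simp [U]) ?_ hz
  have hreal : Tendsto (fun x : ℝ => (x : ℂ)) (𝓝[≠] 1) (𝓝[≠] ((1 : ℝ) : ℂ)) :=
    (Complex.continuous_ofReal.continuousAt).continuousWithinAt.tendsto_nhdsWithin
      fun x hx => by simpa using hx
  refine hreal.frequently (Eventually.frequently ?_)
  filter_upwards [nhdsWithin_le_nhds (lt_mem_nhds (zero_lt_one (α := ℝ)))] with x hx
  rw [Complex.integral_cpow_mul_exp_neg_mul_Ioi ha hx, one_div,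
    Complex.inv_cpow_ofReal_nonneg hx.le, Complex.cpow_neg]

theorem integral_rpow_mul_cexp_neg_mul_Ioi {s : ℝ} {z : ℂ} (hs : 0 < s) (hz : 0 < z.re) :
    ∫ t in Ioi (0 : ℝ), ((t ^ (s - 1) : ℝ) : ℂ) * Complex.exp (-(z * t)) =
      z ^ (-(s : ℂ)) * Real.Gamma s := by
  rw [← Complex.Gamma_ofReal, ← integral_cpow_mul_cexp_neg_mul_Ioi (by simpa) hz]
  refine setIntegral_congr_fun measurableSet_Ioi fun t (ht : 0 < t) => ?_
  simp only [Complex.ofReal_cpow ht.le, Complex.ofReal_sub, Complex.ofReal_one]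

/-- The angle `θ` between the negative real axis and the Hankel contour chosen for `W(·; -α, 0)`.
As `(1 + α) θ = π α`, on the contour `z = -exp (-iθ) t` one has `z ^ α = exp (iθ) t ^ α`, so that
`exp z` and `exp (-y z ^ α)` decay along the same pair of directions. -/
noncomputable def wrightAngle (α : ℝ) : ℝ := π * α / (1 + α)

/-- The unit vector at angle `wrightAngle α`. Its inverse is the direction of the ray along which
the Wright integrand is integrated. -/
noncomputable def wrightDir (α : ℝ) : ℂ := Complex.exp (wrightAngle α * Complex.I)

/-- The integrand `exp (-w⁻¹ t) exp (-y w t ^ α)`, `w = wrightDir α`, of the contour integral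
representing `W(-y; -α, 0)`. -/
noncomputable def wrightIntegrand (α y t : ℝ) : ℂ :=
  Complex.exp (-((wrightDir α)⁻¹ * t)) * Complex.exp (-(y * wrightDir α * ((t ^ α : ℝ) : ℂ)))

/-- The contour integral representing `W(-y; -α, 0)`, the two conjugate branches of the Hankel
contour being combined into an imaginary part. -/
noncomputable def wrightContour (α y : ℝ) : ℝ :=
  -(1 / π) * ((wrightDir α)⁻¹ * ∫ t in Ioi (0 : ℝ), wrightIntegrand α y t).im

theorem wrightDir_ne_zero (α : ℝ) : wrightDir α ≠ 0 := Complex.exp_ne_zero _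

theorem norm_wrightDir (α : ℝ) : ‖wrightDir α‖ = 1 := Complex.norm_exp_ofReal_mul_I _

theorem inv_wrightDir_re (α : ℝ) : (wrightDir α)⁻¹.re = (wrightDir α).re := by
  rw [Complex.inv_re, Complex.normSq_eq_norm_sq, norm_wrightDir, one_pow, div_one]

theorem measurable_uncurry_wrightIntegrand (α : ℝ) :
    Measurable (Function.uncurry (wrightIntegrand α)) := by
  unfold wrightIntegrand Function.uncurry
  fun_prop

theorem measurable_wrightContour (α : ℝ) : Measurable (wrightContour α) := by
  have hint := (measurable_uncurry_wrightIntegrand α).stronglyMeasurable.integral_prod_right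
    (ν := volume.restrict (Ioi 0))
  exact (Complex.measurable_im.comp (hint.measurable.const_mul _)).const_mul _

theorem norm_wrightIntegrand (α y t : ℝ) :
    ‖wrightIntegrand α y t‖ =
      Real.exp (-((wrightDir α).re * t)) * Real.exp (-(y * (wrightDir α).re * t ^ α)) := by
  rw [wrightIntegrand, norm_mul, norm_cexp_neg_mul_ofReal, norm_cexp_neg_mul_ofReal,
    inv_wrightDir_re, Complex.re_ofReal_mul]

theorem abs_inv_pi_mul_im_inv_wrightDir_mul_le (α : ℝ) (z : ℂ) :
    |-(1 / π) * ((wrightDir α)⁻¹ * z).im| ≤ ‖z‖ := by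
  have hπ : 1 / π ≤ 1 := by rw [div_le_one pi_pos]; linarith [pi_gt_three]
  calc |-(1 / π) * ((wrightDir α)⁻¹ * z).im|
      = 1 / π * |((wrightDir α)⁻¹ * z).im| := by
        rw [abs_mul, abs_neg, abs_of_pos (by positivity)]
    _ ≤ 1 * ‖(wrightDir α)⁻¹ * z‖ := by
        gcongr
        exact Complex.abs_im_le_norm _
    _ = ‖z‖ := by rw [one_mul, norm_mul, norm_inv, norm_wrightDir, inv_one, one_mul]

theorem inv_Gamma_neg {x : ℝ} (hx : -1 < x) :
    (Real.Gamma (-x))⁻¹ = -(1 / π) * (Real.Gamma (1 + x) * Real.sin (π * x)) := by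
  have hreflect := Real.Gamma_mul_Gamma_one_sub (-x)
  have hpos : Real.Gamma (1 + x) ≠ 0 := (Real.Gamma_pos_of_pos (by linarith)).ne'
  rw [sub_neg_eq_add, mul_neg, Real.sin_neg] at hreflect
  rcases eq_or_ne (Real.sin (π * x)) 0 with hsin | hsin
  · rw [hsin, neg_zero, div_zero, mul_eq_zero_iff_right hpos] at hreflect
    simp [hsin, hreflect]
  · rw [eq_div_of_mul_eq hpos hreflect]
    field_simp

theorem ofReal_mul_cpow {x : ℝ} (hx : 0 < x) (w a : ℂ) :
    ((x : ℂ) * w) ^ a = (x : ℂ) ^ a * w ^ a := by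
  rcases eq_or_ne w 0 with rfl | hw
  · rcases eq_or_ne a 0 with rfl | ha <;> simp [*]
  · have hx' : (x : ℂ) ≠ 0 := Complex.ofReal_ne_zero.2 hx.ne'
    rw [Complex.cpow_def_of_ne_zero (mul_ne_zero hx' hw), Complex.log_ofReal_mul hx hw, add_mul,
      Complex.exp_add, Complex.ofReal_log hx.le, ← Complex.cpow_def_of_ne_zero hx',
      ← Complex.cpow_def_of_ne_zero hw]

theorem norm_cexp_neg_sub_one_le {z : ℂ} (hz : 0 ≤ z.re) :
    ‖Complex.exp (-z) - 1‖ ≤ 2 * ‖z‖ := by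
  rcases le_total ‖z‖ 1 with h | h
  · simpa using Complex.norm_exp_sub_one_le (x := -z) (by simpa using h)
  · have hexp : ‖Complex.exp (-z)‖ ≤ 1 := by simpa [Complex.norm_exp] using hz
    calc ‖Complex.exp (-z) - 1‖ ≤ ‖Complex.exp (-z)‖ + ‖(1 : ℂ)‖ := norm_sub_le _ _
      _ ≤ 2 * ‖z‖ := by rw [norm_one]; linarith

theorem exp_neg_le_inv {u : ℝ} (hu : 0 < u) : Real.exp (-u) ≤ u⁻¹ := by
  rw [Real.exp_neg]
  exact inv_anti₀ hu (by linarith [Real.add_one_le_exp u])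

section WrightFunction

variable {α : ℝ} (hα₀ : 0 < α) (hα₁ : α < 1)

include hα₀ hα₁

theorem wrightAngle_mem_Ioo : wrightAngle α ∈ Ioo 0 (π / 2) := by
  refine ⟨by unfold wrightAngle; positivity, ?_⟩
  rw [wrightAngle, div_lt_div_iff₀ (by linarith) two_pos]
  nlinarith [pi_pos]

theorem wrightDir_re_pos : 0 < (wrightDir α).re := by
  have hangle := wrightAngle_mem_Ioo hα₀ hα₁
  rw [wrightDir, Complex.exp_ofReal_mul_I_re]
  exact cos_pos_of_mem_Ioo ⟨by linarith [hangle.1, pi_pos], hangle.2⟩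

theorem inv_wrightDir_re_pos : 0 < (wrightDir α)⁻¹.re :=
  (inv_wrightDir_re α).symm ▸ wrightDir_re_pos hα₀ hα₁

theorem inv_wrightDir_mul_cpow (x : ℝ) :
    (wrightDir α)⁻¹ * ((wrightDir α)⁻¹ ^ (-((1 + α * x : ℝ) : ℂ)) * wrightDir α ^ (x : ℂ)) =
      Complex.exp ((π * (α * x) : ℝ) * Complex.I) := by
  have hlog : Complex.log (wrightDir α) = wrightAngle α * Complex.I := by
    have hangle := wrightAngle_mem_Ioo hα₀ hα₁
    rw [wrightDir, Complex.log_exp] <;> simp <;> linarith [hangle.1, hangle.2, pi_pos]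
  have harg : (wrightDir α).arg ≠ π := fun h => by
    have := (Complex.arg_eq_pi_iff.1 h).1
    linarith [wrightDir_re_pos hα₀ hα₁]
  have h1α : (1 + α : ℂ) ≠ 0 := by exact_mod_cast (by positivity : (1 + α : ℝ) ≠ 0)
  rw [Complex.inv_cpow _ _ harg, Complex.cpow_neg, inv_inv]
  simp only [Complex.cpow_def_of_ne_zero (wrightDir_ne_zero α), hlog]
  rw [wrightDir, ← Complex.exp_neg, ← Complex.exp_add, ← Complex.exp_add, wrightAngle]
  congr 1
  push_cast
  field_simp
  ring

/-! ### The contour representation -/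

theorem integrableOn_exp_neg_mul_mul_exp_rpow {c : ℝ} (hc : 0 < c) (y : ℝ) :
    IntegrableOn (fun t : ℝ => Real.exp (-(c * t)) * Real.exp (y * t ^ α)) (Ioi 0) := by
  have hcont : Continuous fun t : ℝ => t ^ α := continuous_id.rpow_const fun _ => Or.inr hα₀.le
  refine integrable_of_isBigO_exp_neg (half_pos hc) (by fun_prop) ?_
  have hsmall : Tendsto (fun t : ℝ => y * t ^ (-(1 - α))) atTop (𝓝 0) := by
    simpa using (tendsto_rpow_neg_atTop (sub_pos.2 hα₁)).const_mul y
  refine Asymptotics.IsBigO.of_bound 1 ?_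
  filter_upwards [hsmall.eventually (gt_mem_nhds (half_pos hc)), eventually_gt_atTop 0]
    with t ht ht₀
  have hsplit : t ^ α = t ^ (-(1 - α)) * t := by
    rw [← rpow_add_one ht₀.ne', neg_sub, sub_add_cancel]
  rw [norm_of_nonneg (by positivity), norm_of_nonneg (by positivity), one_mul, ← Real.exp_add,
    Real.exp_le_exp, hsplit]
  nlinarith

theorem hasSum_integral_wrightIntegrand {y : ℝ} (hy : 0 ≤ y) :
    HasSum (fun k : ℕ => ∫ t in Ioi (0 : ℝ), Complex.exp (-((wrightDir α)⁻¹ * t)) *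
      ((k.factorial : ℂ)⁻¹ * (-(y * wrightDir α * ((t ^ α : ℝ) : ℂ))) ^ k))
      (∫ t in Ioi (0 : ℝ), wrightIntegrand α y t) := by
  set c := (wrightDir α).re
  have hmajorant (t : ℝ) : HasSum
      (fun k : ℕ => Real.exp (-(c * t)) * ((k.factorial : ℝ)⁻¹ * (y * t ^ α) ^ k))
      (Real.exp (-(c * t)) * Real.exp (y * t ^ α)) := by
    simpa [Real.exp_eq_exp_ℝ] using
      (NormedSpace.exp_series_hasSum_exp' (𝕂 := ℝ) (y * t ^ α)).mul_left (Real.exp (-(c * t)))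
  refine hasSum_integral_of_dominated_convergence
    (fun k t => Real.exp (-(c * t)) * ((k.factorial : ℝ)⁻¹ * (y * t ^ α) ^ k))
    (fun k => by fun_prop) (fun k => ?_) (ae_of_all _ fun t => (hmajorant t).summable) ?_
    (ae_of_all _ fun t => ?_)
  · filter_upwards [ae_restrict_mem measurableSet_Ioi] with t (ht : 0 < t)
    rw [norm_mul, norm_cexp_neg_mul_ofReal, inv_wrightDir_re, norm_mul, norm_pow, norm_neg,
      norm_mul, norm_mul, norm_wrightDir, Complex.norm_of_nonneg hy,
      Complex.norm_of_nonneg (by positivity), mul_one, norm_inv, Complex.norm_natCast]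
  · simp_rw [fun t => (hmajorant t).tsum_eq]
    exact integrableOn_exp_neg_mul_mul_exp_rpow hα₀ hα₁ (wrightDir_re_pos hα₀ hα₁) y
  · simpa [Complex.exp_eq_exp_ℂ, wrightIntegrand] using
      (NormedSpace.exp_series_hasSum_exp' (𝕂 := ℂ)
        (-(y * wrightDir α * ((t ^ α : ℝ) : ℂ)))).mul_left
        (Complex.exp (-((wrightDir α)⁻¹ * t)))

theorem inv_wrightDir_mul_integral_series_term (y : ℝ) (k : ℕ) :
    (wrightDir α)⁻¹ * ∫ t in Ioi (0 : ℝ), Complex.exp (-((wrightDir α)⁻¹ * t)) *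
        ((k.factorial : ℂ)⁻¹ * (-(y * wrightDir α * ((t ^ α : ℝ) : ℂ))) ^ k) =
      ((-y) ^ k / k.factorial * Real.Gamma (1 + α * k) : ℝ) *
        Complex.exp ((π * (α * k) : ℝ) * Complex.I) := by
  set w := wrightDir α
  have hmoment : ∫ t in Ioi (0 : ℝ), Complex.exp (-(w⁻¹ * t)) *
      ((k.factorial : ℂ)⁻¹ * (-(y * w * ((t ^ α : ℝ) : ℂ))) ^ k) =
      (((-y) ^ k / k.factorial : ℝ) * w ^ k) *
        (w⁻¹ ^ (-((1 + α * k : ℝ) : ℂ)) * Real.Gamma (1 + α * k)) := by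
    rw [← integral_rpow_mul_cexp_neg_mul_Ioi (by positivity)
      (inv_wrightDir_re_pos hα₀ hα₁),
      ← MeasureTheory.integral_const_mul]
    refine setIntegral_congr_fun measurableSet_Ioi fun t (ht : 0 < t) => ?_
    have hpow : t ^ (1 + α * k - 1) = (t ^ α) ^ k := by
      rw [← rpow_mul_natCast ht.le, add_sub_cancel_left]
    simp only [hpow]
    push_cast
    rw [← neg_mul, ← neg_mul]
    ring
  rw [hmoment, ← inv_wrightDir_mul_cpow hα₀ hα₁, Complex.ofReal_natCast, Complex.cpow_natCast]
  push_cast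
  ring

theorem wrightW_zero_neg {y : ℝ} (hy : 0 ≤ y) : wrightW α 0 (-y) = wrightContour α y := by
  have hseries := (Complex.hasSum_im
    ((hasSum_integral_wrightIntegrand hα₀ hα₁ hy).mul_left (wrightDir α)⁻¹)).mul_left (-(1 / π))
  refine Eq.trans (tsum_congr fun k => ?_) hseries.tsum_eq
  have hk : -1 < α * k := neg_one_lt_zero.trans_le (by positivity)
  rw [inv_wrightDir_mul_integral_series_term hα₀ hα₁, Complex.im_ofReal_mul,
    Complex.exp_ofReal_mul_I_im, zero_sub, div_mul_eq_div_div, div_eq_mul_inv _ (Real.Gamma _),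
    inv_Gamma_neg hk]
  ring

/-! ### Bounds on the contour integral -/

theorem norm_wrightIntegrand_le {y t : ℝ} (hy : 0 ≤ y) (ht : 0 < t) :
    ‖wrightIntegrand α y t‖ ≤ Real.exp (-((wrightDir α).re * t)) := by
  have hre := wrightDir_re_pos hα₀ hα₁
  rw [norm_wrightIntegrand]
  refine mul_le_of_le_one_right (by positivity) (Real.exp_le_one_iff.2 (neg_nonpos.2 ?_))
  positivity

theorem integrableOn_exp_neg_wrightDir_re_mul :
    IntegrableOn (fun t : ℝ => Real.exp (-((wrightDir α).re * t))) (Ioi 0) := by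
  simpa using exp_neg_integrableOn_Ioi 0 (wrightDir_re_pos hα₀ hα₁)

theorem integrableOn_wrightIntegrand {y : ℝ} (hy : 0 ≤ y) :
    IntegrableOn (wrightIntegrand α y) (Ioi 0) := by
  refine (integrableOn_exp_neg_wrightDir_re_mul hα₀ hα₁).mono'
    ((measurable_uncurry_wrightIntegrand α).comp measurable_prodMk_left).aestronglyMeasurable ?_
  filter_upwards [ae_restrict_mem measurableSet_Ioi] with t ht
  exact norm_wrightIntegrand_le hα₀ hα₁ hy ht

theorem exists_abs_wrightContour_le : ∃ C, ∀ y, 0 < y → |wrightContour α y| ≤ C := by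
  refine ⟨_, fun y hy => (abs_inv_pi_mul_im_inv_wrightDir_mul_le α _).trans
    (norm_integral_le_of_norm_le (integrableOn_exp_neg_wrightDir_re_mul hα₀ hα₁) ?_)⟩
  filter_upwards [ae_restrict_mem measurableSet_Ioi] with t ht
  exact norm_wrightIntegrand_le hα₀ hα₁ hy.le ht

theorem exists_abs_wrightContour_le_mul_inv :
    ∃ C, ∀ y, 0 < y → |wrightContour α y| ≤ C * y⁻¹ := by
  have hre := wrightDir_re_pos hα₀ hα₁
  set c := (wrightDir α).re
  have hbound : IntegrableOn (fun t : ℝ => c⁻¹ * (t ^ (-α) * Real.exp (-(c * t)))) (Ioi 0) :=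
    (integrableOn_rpow_mul_exp_neg_mul (by linarith) hre).const_mul c⁻¹
  refine ⟨∫ t in Ioi (0 : ℝ), c⁻¹ * (t ^ (-α) * Real.exp (-(c * t))), fun y hy => ?_⟩
  rw [← MeasureTheory.integral_mul_const]
  refine (abs_inv_pi_mul_im_inv_wrightDir_mul_le α _).trans
    (norm_integral_le_of_norm_le (hbound.mul_const _) ?_)
  filter_upwards [ae_restrict_mem measurableSet_Ioi] with t (ht : 0 < t)
  calc ‖wrightIntegrand α y t‖ ≤ Real.exp (-(c * t)) * (y * c * t ^ α)⁻¹ := by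
        rw [norm_wrightIntegrand]
        gcongr
        exact exp_neg_le_inv (by positivity)
    _ = c⁻¹ * (t ^ (-α) * Real.exp (-(c * t))) * y⁻¹ := by
        rw [rpow_neg ht.le, mul_inv, mul_inv]
        ring

-- At `y = 0` the contour integral is the imaginary part of `1`, hence vanishes.
theorem wrightContour_eq_integral_sub {y : ℝ} (hy : 0 ≤ y) :
    wrightContour α y = -(1 / π) * ((wrightDir α)⁻¹ * ∫ t in Ioi (0 : ℝ),
      (wrightIntegrand α y t - Complex.exp (-((wrightDir α)⁻¹ * t)))).im := by
  have hre : (-(wrightDir α)⁻¹).re < 0 := neg_neg_of_pos (inv_wrightDir_re_pos hα₀ hα₁)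
  have hint := integrableOn_exp_mul_complex_Ioi hre 0
  have hval := integral_exp_mul_complex_Ioi hre 0
  simp only [neg_mul, Complex.ofReal_zero, mul_zero, Complex.exp_zero, neg_div_neg_eq,
    one_div, inv_inv] at hint hval
  rw [MeasureTheory.integral_sub (integrableOn_wrightIntegrand hα₀ hα₁ hy) hint, hval, mul_sub,
    inv_mul_cancel₀ (wrightDir_ne_zero α), Complex.sub_im, Complex.one_im, sub_zero, wrightContour]

theorem exists_abs_wrightContour_le_mul : ∃ C, ∀ y, 0 < y → |wrightContour α y| ≤ C * y := by
  have hre := wrightDir_re_pos hα₀ hα₁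
  set c := (wrightDir α).re with hc
  have hbound : IntegrableOn (fun t : ℝ => 2 * (t ^ α * Real.exp (-(c * t)))) (Ioi 0) :=
    (integrableOn_rpow_mul_exp_neg_mul (by linarith) hre).const_mul 2
  refine ⟨∫ t in Ioi (0 : ℝ), 2 * (t ^ α * Real.exp (-(c * t))), fun y hy => ?_⟩
  rw [← MeasureTheory.integral_mul_const, wrightContour_eq_integral_sub hα₀ hα₁ hy.le]
  refine (abs_inv_pi_mul_im_inv_wrightDir_mul_le α _).trans
    (norm_integral_le_of_norm_le (hbound.mul_const _) ?_)
  filter_upwards [ae_restrict_mem measurableSet_Ioi] with t (ht : 0 < t)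
  have hexp := norm_cexp_neg_sub_one_le (z := y * wrightDir α * ((t ^ α : ℝ) : ℂ)) (by
    rw [Complex.re_mul_ofReal, Complex.re_ofReal_mul]; positivity)
  rw [norm_mul, norm_mul, norm_wrightDir, Complex.norm_of_nonneg hy.le,
    Complex.norm_of_nonneg (by positivity), mul_one] at hexp
  rw [wrightIntegrand, ← mul_sub_one, norm_mul, norm_cexp_neg_mul_ofReal, inv_wrightDir_re, ← hc]
  calc _ ≤ Real.exp (-(c * t)) * (2 * (y * t ^ α)) := by gcongr
    _ = 2 * (t ^ α * Real.exp (-(c * t))) * y := by ring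

theorem exists_wrightContour_bounds :
    ∃ C, 0 ≤ C ∧ ∀ y, 0 < y → |wrightContour α y| ≤ C ∧ |wrightContour α y| ≤ C * y ∧
      |wrightContour α y| ≤ C * y⁻¹ := by
  obtain ⟨A, hA⟩ := exists_abs_wrightContour_le hα₀ hα₁
  obtain ⟨B, hB⟩ := exists_abs_wrightContour_le_mul hα₀ hα₁
  obtain ⟨D, hD⟩ := exists_abs_wrightContour_le_mul_inv hα₀ hα₁
  refine ⟨max A (max B D), (abs_nonneg _).trans ((hA 1 one_pos).trans (le_max_left _ _)),
    fun y hy => ⟨(hA y hy).trans (le_max_left _ _), (hB y hy).trans ?_, (hD y hy).trans ?_⟩⟩ <;>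
  gcongr <;> simp

/-! ### The Mellin transform -/

omit hα₀ hα₁ in
theorem norm_rpow_mul_wrightIntegrand (s : ℝ) {y : ℝ} (hy : 0 < y) (t : ℝ) :
    ‖((y ^ (s - 1) : ℝ) : ℂ) * wrightIntegrand α y t‖ = Real.exp (-((wrightDir α).re * t)) *
      (y ^ (s - 1) * Real.exp (-((wrightDir α).re * t ^ α * y))) := by
  rw [norm_mul, norm_wrightIntegrand, Complex.norm_of_nonneg (by positivity), mul_left_comm]
  ring_nf

theorem integrable_rpow_mul_wrightIntegrand {s : ℝ} (hs₀ : 0 < s) (hs₁ : s < 1) :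
    Integrable (fun q : ℝ × ℝ => ((q.1 ^ (s - 1) : ℝ) : ℂ) * wrightIntegrand α q.1 q.2)
      ((volume.restrict (Ioi 0)).prod (volume.restrict (Ioi 0))) := by
  have hre := wrightDir_re_pos hα₀ hα₁
  have hmeas : Measurable
      (fun q : ℝ × ℝ => ((q.1 ^ (s - 1) : ℝ) : ℂ) * wrightIntegrand α q.1 q.2) :=
    Measurable.mul (by fun_prop) (measurable_uncurry_wrightIntegrand α)
  rw [integrable_prod_iff' hmeas.aestronglyMeasurable]
  constructor
  · filter_upwards [ae_restrict_mem measurableSet_Ioi] with t (ht : 0 < t)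
    refine ((integrableOn_rpow_mul_exp_neg_mul (s := s - 1)
      (c := (wrightDir α).re * t ^ α) (by linarith) (by positivity)).const_mul
      (Real.exp (-((wrightDir α).re * t)))).mono'
      (hmeas.comp measurable_prodMk_right).aestronglyMeasurable ?_
    filter_upwards [ae_restrict_mem measurableSet_Ioi] with y hy
    exact (norm_rpow_mul_wrightIntegrand s hy t).le
  · have hαs : -1 < -(α * s) := by nlinarith
    refine ((integrableOn_rpow_mul_exp_neg_mul hαs hre).const_mul
      ((1 / (wrightDir α).re) ^ s * Real.Gamma s)).congr ?_
    filter_upwards [ae_restrict_mem measurableSet_Ioi] with t (ht : 0 < t)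
    rw [setIntegral_congr_fun measurableSet_Ioi fun y hy => norm_rpow_mul_wrightIntegrand s hy t,
      MeasureTheory.integral_const_mul, Real.integral_rpow_mul_exp_neg_mul_Ioi hs₀ (by positivity),
      one_div, one_div, mul_inv, mul_rpow (by positivity) (by positivity), ← rpow_neg ht.le,
      ← rpow_mul ht.le]
    ring_nf

theorem integral_rpow_mul_wrightIntegrand {s t : ℝ} (hs : 0 < s) (ht : 0 < t) :
    ∫ y in Ioi (0 : ℝ), ((y ^ (s - 1) : ℝ) : ℂ) * wrightIntegrand α y t =
      wrightDir α ^ (-(s : ℂ)) * Real.Gamma s *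
        (((t ^ (1 - α * s - 1) : ℝ) : ℂ) * Complex.exp (-((wrightDir α)⁻¹ * t))) := by
  set w := wrightDir α
  have htα : 0 < t ^ α := rpow_pos_of_pos ht α
  have hre : 0 < (((t ^ α : ℝ) : ℂ) * w).re := by
    rw [Complex.re_ofReal_mul]
    exact mul_pos htα (wrightDir_re_pos hα₀ hα₁)
  have hpow : (((t ^ α : ℝ) : ℂ) * w) ^ (-(s : ℂ)) =
      ((t ^ (1 - α * s - 1) : ℝ) : ℂ) * w ^ (-(s : ℂ)) := by
    rw [ofReal_mul_cpow htα, ← Complex.ofReal_neg, ← Complex.ofReal_cpow htα.le, ← rpow_mul ht.le]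
    ring_nf
  calc ∫ y in Ioi (0 : ℝ), ((y ^ (s - 1) : ℝ) : ℂ) * wrightIntegrand α y t
      = ∫ y in Ioi (0 : ℝ), Complex.exp (-(w⁻¹ * t)) *
          (((y ^ (s - 1) : ℝ) : ℂ) * Complex.exp (-(((t ^ α : ℝ) : ℂ) * w * y))) := by
        congr! 2 with y
        rw [wrightIntegrand, mul_left_comm]
        congr 4
        ring
    _ = _ := by
        rw [MeasureTheory.integral_const_mul, integral_rpow_mul_cexp_neg_mul_Ioi hs hre, hpow]
        ring

theorem inv_wrightDir_mul_integral_integral {s : ℝ} (hs₀ : 0 < s) (hs₁ : s < 1) :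
    (wrightDir α)⁻¹ * ∫ y in Ioi (0 : ℝ), ∫ t in Ioi (0 : ℝ),
        ((y ^ (s - 1) : ℝ) : ℂ) * wrightIntegrand α y t =
      (Real.Gamma s * Real.Gamma (1 - α * s) : ℝ) *
        Complex.exp ((-(π * (α * s)) : ℝ) * Complex.I) := by
  have hαs : 0 < 1 - α * s := by nlinarith
  have hphase := inv_wrightDir_mul_cpow hα₀ hα₁ (-s)
  simp only [mul_neg, ← sub_eq_add_neg] at hphase
  rw [integral_integral_swap (integrable_rpow_mul_wrightIntegrand hα₀ hα₁ hs₀ hs₁),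
    setIntegral_congr_fun measurableSet_Ioi
      fun t ht => integral_rpow_mul_wrightIntegrand hα₀ hα₁ hs₀ ht,
    MeasureTheory.integral_const_mul,
    integral_rpow_mul_cexp_neg_mul_Ioi hαs (inv_wrightDir_re_pos hα₀ hα₁), ← hphase]
  push_cast
  ring

theorem mellin_wrightContour {s : ℝ} (hs₀ : 0 < s) (hs₁ : s < 1) :
    ∫ y in Ioi (0 : ℝ), y ^ (s - 1) * wrightContour α y =
      π⁻¹ * Real.Gamma s * Real.Gamma (1 - α * s) * Real.sin (π * (α * s)) := by
  have hJ := (integrable_rpow_mul_wrightIntegrand hα₀ hα₁ hs₀ hs₁).integral_prod_left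
  have him : ∫ y in Ioi (0 : ℝ), ((wrightDir α)⁻¹ * ∫ t in Ioi (0 : ℝ),
      ((y ^ (s - 1) : ℝ) : ℂ) * wrightIntegrand α y t).im =
      (∫ y in Ioi (0 : ℝ), (wrightDir α)⁻¹ * ∫ t in Ioi (0 : ℝ),
        ((y ^ (s - 1) : ℝ) : ℂ) * wrightIntegrand α y t).im :=
    integral_im (𝕜 := ℂ) (hJ.const_mul _)
  calc ∫ y in Ioi (0 : ℝ), y ^ (s - 1) * wrightContour α y
      = ∫ y in Ioi (0 : ℝ), -(1 / π) * ((wrightDir α)⁻¹ * ∫ t in Ioi (0 : ℝ),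
          ((y ^ (s - 1) : ℝ) : ℂ) * wrightIntegrand α y t).im := by
        congr! 2 with y
        rw [MeasureTheory.integral_const_mul, mul_left_comm (wrightDir α)⁻¹,
          Complex.im_ofReal_mul, wrightContour]
        ring
    _ = _ := by
        rw [MeasureTheory.integral_const_mul, him, MeasureTheory.integral_const_mul,
          inv_wrightDir_mul_integral_integral hα₀ hα₁ hs₀ hs₁, Complex.im_ofReal_mul,
          Complex.exp_ofReal_mul_I_im, Real.sin_neg]
        ring

omit hα₀ hα₁ in
theorem tendsto_Gamma_mul_Gamma_mul_sin :
    Tendsto (fun s : ℝ => π⁻¹ * Real.Gamma s * Real.Gamma (1 - α * s) * Real.sin (π * (α * s)))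
      (𝓝[>] 0) (𝓝 α) := by
  have hΓ : ContinuousAt Real.Gamma 1 :=
    (Real.differentiableAt_Gamma fun m h => by
      have : (0 : ℝ) ≤ m := m.cast_nonneg
      linarith).continuousAt
  have hΓs : Tendsto (fun s : ℝ => Real.Gamma (s + 1)) (𝓝 0) (𝓝 1) := by
    have : ContinuousAt (fun s : ℝ => Real.Gamma (s + 1)) 0 :=
      ContinuousAt.comp (g := Real.Gamma) (by simpa using hΓ) (by fun_prop)
    simpa [ContinuousAt] using this
  have hΓαs : Tendsto (fun s : ℝ => Real.Gamma (1 - α * s)) (𝓝 0) (𝓝 1) := by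
    have : ContinuousAt (fun s : ℝ => Real.Gamma (1 - α * s)) 0 :=
      ContinuousAt.comp (g := Real.Gamma) (by simpa using hΓ) (by fun_prop)
    simpa [ContinuousAt] using this
  have hsin : Tendsto (fun s : ℝ => s⁻¹ * Real.sin (π * (α * s))) (𝓝[>] 0) (𝓝 (π * α)) := by
    have hderiv : HasDerivAt (fun s : ℝ => Real.sin (π * (α * s))) (π * α) 0 := by
      simpa using (((hasDerivAt_id (0 : ℝ)).const_mul α).const_mul π).sin
    simpa using hderiv.tendsto_slope_zero_right
  have hprod := (((hΓs.mul hΓαs).mono_left nhdsWithin_le_nhds).mul hsin).const_mul π⁻¹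
  rw [one_mul, one_mul, inv_mul_cancel_left₀ pi_pos.ne'] at hprod
  refine hprod.congr' ?_
  filter_upwards [self_mem_nhdsWithin] with s (hs : 0 < s)
  rw [Real.Gamma_add_one hs.ne']
  field_simp

omit hα₀ hα₁ in
theorem integrableOn_Ioi_one_or_rpow {a : ℝ} (ha : a < -1) :
    IntegrableOn (fun y : ℝ => if y ≤ 1 then 1 else y ^ a) (Ioi 0) := by
  rw [← Ioc_union_Ioi_eq_Ioi (zero_le_one (α := ℝ))]
  refine IntegrableOn.union ?_ ?_
  · exact (integrableOn_const (C := (1 : ℝ)) (by simp)).congr_fun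
      (fun y hy => (if_pos hy.2).symm) measurableSet_Ioc
  · exact (integrableOn_Ioi_rpow_of_lt ha one_pos).congr_fun
      (fun y hy => (if_neg (not_le.2 hy)).symm) measurableSet_Ioi

omit hα₀ hα₁ in
theorem norm_rpow_sub_one_mul_le {C s y z : ℝ} (hle : |z| ≤ C * y) (hle_inv : |z| ≤ C * y⁻¹)
    (hC : 0 ≤ C) (hy : 0 < y) (hs₀ : 0 ≤ s) (hs₁ : s ≤ 1 / 2) :
    ‖y ^ (s - 1) * z‖ ≤ C * if y ≤ 1 then 1 else y ^ (-(3 / 2) : ℝ) := by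
  rw [norm_mul, norm_of_nonneg (by positivity), Real.norm_eq_abs]
  split_ifs with h
  · calc y ^ (s - 1) * |z| ≤ y ^ (s - 1) * (C * y) := by gcongr
      _ = C * y ^ s := by rw [mul_left_comm, ← rpow_add_one hy.ne', sub_add_cancel]
      _ ≤ C * 1 := by
        gcongr
        exact rpow_le_one hy.le h hs₀
  · calc y ^ (s - 1) * |z| ≤ y ^ (s - 1) * (C * y⁻¹) := by gcongr
      _ = C * y ^ (s - 1 + -1) := by rw [mul_left_comm, ← rpow_neg_one y, ← rpow_add hy]
      _ ≤ C * y ^ (-(3 / 2) : ℝ) := by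
        gcongr <;> linarith

theorem integrableOn_inv_mul_wrightContour :
    IntegrableOn (fun y => y⁻¹ * wrightContour α y) (Ioi 0) := by
  obtain ⟨C, hC₀, hC⟩ := exists_wrightContour_bounds hα₀ hα₁
  refine ((integrableOn_Ioi_one_or_rpow (a := -(3 / 2)) (by norm_num)).const_mul C).mono'
    (measurable_inv.mul (measurable_wrightContour α)).aestronglyMeasurable ?_
  filter_upwards [ae_restrict_mem measurableSet_Ioi] with y hy
  simpa [rpow_neg_one] using
    norm_rpow_sub_one_mul_le (hC y hy).2.1 (hC y hy).2.2 hC₀ hy le_rfl (by norm_num)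

theorem integral_inv_mul_wrightContour : ∫ y in Ioi (0 : ℝ), y⁻¹ * wrightContour α y = α := by
  obtain ⟨C, hC₀, hC⟩ := exists_wrightContour_bounds hα₀ hα₁
  have hlim : Tendsto (fun s : ℝ => ∫ y in Ioi (0 : ℝ), y ^ (s - 1) * wrightContour α y)
      (𝓝[>] 0) (𝓝 (∫ y in Ioi (0 : ℝ), y⁻¹ * wrightContour α y)) := by
    refine tendsto_integral_filter_of_dominated_convergence
      (fun y => C * if y ≤ 1 then 1 else y ^ (-(3 / 2) : ℝ))
      (Eventually.of_forall fun s =>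
        (Measurable.mul (by fun_prop) (measurable_wrightContour α)).aestronglyMeasurable) ?_
      ((integrableOn_Ioi_one_or_rpow (a := -(3 / 2)) (by norm_num)).const_mul C) ?_
    · filter_upwards [Ioo_mem_nhdsGT one_half_pos] with s hs
      filter_upwards [ae_restrict_mem measurableSet_Ioi] with y hy
      exact norm_rpow_sub_one_mul_le (hC y hy).2.1 (hC y hy).2.2 hC₀ hy hs.1.le hs.2.le
    · filter_upwards [ae_restrict_mem measurableSet_Ioi] with y (hy : 0 < y)
      have hpow : Continuous fun s : ℝ => y ^ (s - 1) :=
        continuous_const.rpow (by fun_prop) fun _ => Or.inl hy.ne'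
      have := (hpow.tendsto 0).mono_left (nhdsWithin_le_nhds (s := Ioi 0))
      rw [zero_sub, rpow_neg_one] at this
      exact this.mul_const _
  refine tendsto_nhds_unique hlim (tendsto_Gamma_mul_Gamma_mul_sin.congr' ?_)
  filter_upwards [Ioo_mem_nhdsGT one_pos] with s hs
  exact (mellin_wrightContour hα₀ hα₁ hs.1 hs.2).symm

end WrightFunction

/-! ### Subordinator densities -/

section ScalingSubstitution

variable {α ℓ : ℝ} {g : ℝ → ℝ}

theorem abs_mul_rpow_smul_inv_mul_comp_rpow {t : ℝ} (hα : 0 < α) (ht : 0 < t) (ℓ : ℝ)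
    (g : ℝ → ℝ) :
    (|(-α)| * t ^ (-α - 1)) • (α⁻¹ * ((t ^ (-α))⁻¹ * g (ℓ * t ^ (-α)))) =
      t⁻¹ * g (ℓ * t ^ (-α)) := by
  have : t ^ (-α) ≠ 0 := by positivity
  rw [abs_neg, abs_of_pos hα, rpow_sub_one ht.ne', smul_eq_mul]
  field_simp

theorem integral_inv_mul_comp_rpow (hα : 0 < α) (hℓ : 0 < ℓ) (g : ℝ → ℝ) :
    ∫ t in Ioi (0 : ℝ), t⁻¹ * g (ℓ * t ^ (-α)) = α⁻¹ * ∫ y in Ioi (0 : ℝ), y⁻¹ * g y := by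
  have hrpow := integral_comp_rpow_Ioi (fun u => α⁻¹ * (u⁻¹ * g (ℓ * u))) (neg_ne_zero.2 hα.ne')
  rw [setIntegral_congr_fun measurableSet_Ioi
    fun t (ht : 0 < t) => abs_mul_rpow_smul_inv_mul_comp_rpow hα ht ℓ g] at hrpow
  have hscale := integral_comp_mul_left_Ioi (fun y => y⁻¹ * g y) 0 hℓ
  rw [mul_zero, smul_eq_mul] at hscale
  rw [hrpow, MeasureTheory.integral_const_mul]
  congr 1
  rw [← mul_right_inj' (inv_ne_zero hℓ.ne'), ← hscale, ← MeasureTheory.integral_const_mul]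
  simp_rw [mul_inv, mul_assoc]

theorem integrableOn_inv_mul_comp_rpow (hα : 0 < α) (hℓ : 0 < ℓ)
    (hg : IntegrableOn (fun y => y⁻¹ * g y) (Ioi 0)) :
    IntegrableOn (fun t => t⁻¹ * g (ℓ * t ^ (-α))) (Ioi 0) := by
  have hscale := (integrableOn_Ioi_comp_mul_left_iff (fun y => y⁻¹ * g y) 0 hℓ).2 (by simpa)
  have hscale' : IntegrableOn (fun u => α⁻¹ * (u⁻¹ * g (ℓ * u))) (Ioi 0) := by
    refine IntegrableOn.congr_fun ((hscale.const_mul ℓ).const_mul α⁻¹) (fun u _ => ?_)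
      measurableSet_Ioi
    simp only [mul_inv]
    field_simp
  exact ((integrableOn_Ioi_comp_rpow_iff _ (neg_ne_zero.2 hα.ne')).2 hscale').congr_fun
    (fun t (ht : 0 < t) => abs_mul_rpow_smul_inv_mul_comp_rpow hα ht ℓ g) measurableSet_Ioi

end ScalingSubstitution

/-- The quantitative properties of the family `p ↦ (t ↦ S⁰_m(t; -λ₁p, …, -λ_m p; -α₁, …, -α_m))`,
extended by zero to `t ≤ 0`, on which the potential theory of `E` rests; the orders `α_j` lie in
`[b, a]`. -/
structure IsSubordinatorFamily (a b C : ℝ) (f : ℝ → ℝ → ℝ) : Prop where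
  nonneg : 0 ≤ C
  measurable : Measurable (Function.uncurry f)
  eq_zero : ∀ p t, t ≤ 0 → f p t = 0
  le_small : ∀ p t, 0 < p → 0 < t → |f p t| ≤ C * (p * (t ^ (-1 - a) + t ^ (-1 - b)))
  le_mid : ∀ p t, 0 < p → 0 < t → |f p t| ≤ C * t⁻¹
  le_large : ∀ p t, 0 < p → 0 < t → |f p t| ≤ C * (p⁻¹ * (t ^ (a - 1) + t ^ (b - 1)))
  integrable : ∀ p, 0 < p → Integrable (f p)
  integral_abs_le : ∀ p, 0 < p → ∫ t, |f p t| ≤ C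
  integral_eq_one : ∀ p, 0 < p → ∫ t, f p t = 1

theorem IsSubordinatorFamily.mono {a b C D : ℝ} {f : ℝ → ℝ → ℝ} (h : IsSubordinatorFamily a b C f)
    (hCD : C ≤ D) : IsSubordinatorFamily a b D f where
  nonneg := h.nonneg.trans hCD
  measurable := h.measurable
  eq_zero := h.eq_zero
  le_small p t hp ht := (h.le_small p t hp ht).trans (by gcongr)
  le_mid p t hp ht := (h.le_mid p t hp ht).trans (by gcongr)
  le_large p t hp ht := (h.le_large p t hp ht).trans (by gcongr)
  integrable := h.integrable
  integral_abs_le p hp := (h.integral_abs_le p hp).trans hCD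
  integral_eq_one := h.integral_eq_one

theorem rpow_le_rpow_add_rpow {t u v w : ℝ} (ht : 0 < t) (huv : u ≤ v) (hvw : v ≤ w) :
    t ^ v ≤ t ^ u + t ^ w := by
  rcases le_total t 1 with h | h
  · exact (rpow_le_rpow_of_exponent_ge ht h huv).trans (le_add_of_nonneg_right (by positivity))
  · exact (rpow_le_rpow_of_exponent_le h hvw).trans (le_add_of_nonneg_left (by positivity))

/-- The kernel `t⁻¹ W(-ℓ p t^{-α}; -α, 0)`, extended by zero to `t ≤ 0`; it is expressed through
the contour integral so that its bounds hold by construction. -/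
noncomputable def wrightKernel (α ℓ p : ℝ) : ℝ → ℝ :=
  (Ioi 0).indicator fun t => t⁻¹ * wrightContour α (ℓ * p * t ^ (-α))

section WrightKernel

variable {α ℓ p t : ℝ}

theorem wrightKernel_of_pos (ht : 0 < t) :
    wrightKernel α ℓ p t = t⁻¹ * wrightContour α (ℓ * p * t ^ (-α)) :=
  indicator_of_mem (mem_Ioi.2 ht) _

theorem wrightKernel_of_nonpos (ht : t ≤ 0) : wrightKernel α ℓ p t = 0 :=
  indicator_of_notMem (notMem_Ioi.2 ht) _

theorem rpow_neg_one_mul_wrightW_eq_wrightKernel (hα₀ : 0 < α) (hα₁ : α < 1) (hℓ : 0 < ℓ)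
    (hp : 0 < p) (ht : 0 < t) :
    t ^ (-1 : ℝ) * wrightW α 0 (-(ℓ * p) * t ^ (-α)) = wrightKernel α ℓ p t := by
  rw [wrightKernel_of_pos ht, rpow_neg_one, neg_mul, wrightW_zero_neg hα₀ hα₁ (by positivity)]

theorem measurable_uncurry_wrightKernel (α ℓ : ℝ) :
    Measurable (Function.uncurry (wrightKernel α ℓ)) := by
  have hmeas : Measurable fun q : ℝ × ℝ => q.2⁻¹ * wrightContour α (ℓ * q.1 * q.2 ^ (-α)) :=
    measurable_snd.inv.mul ((measurable_wrightContour α).comp (by fun_prop))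
  exact hmeas.indicator (measurable_snd measurableSet_Ioi)

theorem abs_wrightKernel_of_pos (ht : 0 < t) :
    |wrightKernel α ℓ p t| = t⁻¹ * |wrightContour α (ℓ * p * t ^ (-α))| := by
  rw [wrightKernel_of_pos ht, abs_mul, abs_of_pos (by positivity)]

theorem abs_wrightKernel_eq_indicator (α ℓ p : ℝ) : (fun t => |wrightKernel α ℓ p t|) =
    (Ioi 0).indicator fun t => t⁻¹ * |wrightContour α (ℓ * p * t ^ (-α))| := by
  ext t
  rcases lt_or_ge 0 t with ht | ht
  · rw [abs_wrightKernel_of_pos ht, indicator_of_mem (mem_Ioi.2 ht)]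
  · rw [wrightKernel_of_nonpos ht, abs_zero, indicator_of_notMem (notMem_Ioi.2 ht)]

theorem abs_wrightKernel_le_mul_rpow {C : ℝ} (hC : ∀ y, 0 < y → |wrightContour α y| ≤ C * y)
    (hℓ : 0 < ℓ) (hp : 0 < p) (ht : 0 < t) :
    |wrightKernel α ℓ p t| ≤ C * ℓ * (p * t ^ (-1 - α)) := by
  calc |wrightKernel α ℓ p t| ≤ t⁻¹ * (C * (ℓ * p * t ^ (-α))) := by
        rw [abs_wrightKernel_of_pos ht]
        gcongr
        exact hC _ (by positivity)
    _ = C * ℓ * (p * t ^ (-1 - α)) := by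
        rw [sub_eq_add_neg, rpow_add ht, rpow_neg_one]
        ring

theorem abs_wrightKernel_le_inv_mul_rpow {C : ℝ}
    (hC : ∀ y, 0 < y → |wrightContour α y| ≤ C * y⁻¹) (hℓ : 0 < ℓ) (hp : 0 < p) (ht : 0 < t) :
    |wrightKernel α ℓ p t| ≤ C * ℓ⁻¹ * (p⁻¹ * t ^ (α - 1)) := by
  calc |wrightKernel α ℓ p t| ≤ t⁻¹ * (C * (ℓ * p * t ^ (-α))⁻¹) := by
        rw [abs_wrightKernel_of_pos ht]
        gcongr
        exact hC _ (by positivity)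
    _ = C * ℓ⁻¹ * (p⁻¹ * t ^ (α - 1)) := by
        rw [rpow_sub_one ht.ne', rpow_neg ht.le]
        field_simp

theorem abs_wrightKernel_le_inv {C : ℝ} (hC : ∀ y, 0 < y → |wrightContour α y| ≤ C)
    (hℓ : 0 < ℓ) (hp : 0 < p) (ht : 0 < t) : |wrightKernel α ℓ p t| ≤ C * t⁻¹ := by
  rw [abs_wrightKernel_of_pos ht, mul_comm]
  gcongr
  exact hC _ (by positivity)

theorem integrable_wrightKernel (hα₀ : 0 < α) (hα₁ : α < 1) (hℓ : 0 < ℓ) (hp : 0 < p) :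
    Integrable (wrightKernel α ℓ p) :=
  (integrable_indicator_iff measurableSet_Ioi).2 <|
    integrableOn_inv_mul_comp_rpow hα₀ (mul_pos hℓ hp) (integrableOn_inv_mul_wrightContour hα₀ hα₁)

theorem integral_wrightKernel (hα₀ : 0 < α) (hα₁ : α < 1) (hℓ : 0 < ℓ) (hp : 0 < p) :
    ∫ t, wrightKernel α ℓ p t = 1 := by
  rw [wrightKernel, MeasureTheory.integral_indicator measurableSet_Ioi,
    integral_inv_mul_comp_rpow hα₀ (mul_pos hℓ hp), integral_inv_mul_wrightContour hα₀ hα₁,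
    inv_mul_cancel₀ hα₀.ne']

theorem integral_abs_wrightKernel (hα₀ : 0 < α) (hℓ : 0 < ℓ) (hp : 0 < p) :
    ∫ t, |wrightKernel α ℓ p t| = α⁻¹ * ∫ y in Ioi (0 : ℝ), y⁻¹ * |wrightContour α y| := by
  rw [abs_wrightKernel_eq_indicator, MeasureTheory.integral_indicator measurableSet_Ioi,
    integral_inv_mul_comp_rpow hα₀ (mul_pos hℓ hp) fun y => |wrightContour α y|]

theorem exists_isSubordinatorFamily_wrightKernel {a b : ℝ} (hα₀ : 0 < α) (hα₁ : α < 1)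
    (hb : b ≤ α) (ha : α ≤ a) (hℓ : 0 < ℓ) :
    ∃ C, IsSubordinatorFamily a b C (wrightKernel α ℓ) := by
  obtain ⟨C, hC₀, hC⟩ := exists_wrightContour_bounds hα₀ hα₁
  set L := α⁻¹ * ∫ y in Ioi (0 : ℝ), y⁻¹ * |wrightContour α y|
  have hL : 0 ≤ L := mul_nonneg (by positivity)
    (setIntegral_nonneg measurableSet_Ioi fun y (hy : 0 < y) => by positivity)
  have hCℓ : 0 ≤ C * ℓ := by positivity
  have hCℓ_inv : 0 ≤ C * ℓ⁻¹ := by positivity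
  refine ⟨C + C * ℓ + C * ℓ⁻¹ + L, by positivity, measurable_uncurry_wrightKernel α ℓ,
    fun p t => wrightKernel_of_nonpos, fun p t hp ht => ?_, fun p t hp ht => ?_,
    fun p t hp ht => ?_, fun p => integrable_wrightKernel hα₀ hα₁ hℓ, fun p hp => ?_,
    fun p => integral_wrightKernel hα₀ hα₁ hℓ⟩
  · refine (abs_wrightKernel_le_mul_rpow (fun y hy => (hC y hy).2.1) hℓ hp ht).trans ?_
    gcongr
    · linarith
    · exact rpow_le_rpow_add_rpow ht (by linarith) (by linarith)
  · refine (abs_wrightKernel_le_inv (fun y hy => (hC y hy).1) hℓ hp ht).trans ?_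
    gcongr
    linarith
  · refine (abs_wrightKernel_le_inv_mul_rpow (fun y hy => (hC y hy).2.2) hℓ hp ht).trans ?_
    gcongr
    · linarith
    · rw [add_comm]
      exact rpow_le_rpow_add_rpow ht (by linarith) (by linarith)
  · rw [integral_abs_wrightKernel hα₀ hℓ hp]
    linarith

end WrightKernel

section Convolution

variable {f g : ℝ → ℝ} {t : ℝ}

theorem integral_mul_sub_eq_zero (hf : ∀ τ ≤ 0, f τ = 0) (hg : ∀ τ ≤ 0, g τ = 0) (ht : t ≤ 0) :
    ∫ τ, f τ * g (t - τ) = 0 := by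
  refine integral_eq_zero_of_ae (Eventually.of_forall fun τ => ?_)
  rcases le_total τ 0 with h | h
  · simp [hf τ h]
  · simp [hg (t - τ) (by linarith)]

theorem laplaceConv_eq_integral_mul_sub {f' g' : ℝ → ℝ} (hf : ∀ τ > 0, f τ = f' τ)
    (hg : ∀ τ > 0, g τ = g' τ) (hf' : ∀ τ ≤ 0, f' τ = 0) (hg' : ∀ τ ≤ 0, g' τ = 0)
    (ht : 0 ≤ t) : laplaceConv f g t = ∫ τ, f' τ * g' (t - τ) := by
  rw [laplaceConv, intervalIntegral.integral_of_le ht, integral_Ioc_eq_integral_Ioo,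
    setIntegral_congr_fun measurableSet_Ioo
      (fun τ hτ => by rw [hf τ hτ.1, hg (t - τ) (sub_pos.2 hτ.2)])]
  refine setIntegral_eq_integral_of_forall_compl_eq_zero fun τ hτ => ?_
  rcases le_or_gt τ 0 with h | h
  · rw [hf' τ h, zero_mul]
  · rw [hg' (t - τ) (sub_nonpos.2 (not_lt.1 fun h' => hτ ⟨h, h'⟩)), mul_zero]

theorem integral_abs_integral_mul_sub_le (hf : Integrable f) (hg : Integrable g) :
    ∫ t, |∫ τ, f τ * g (t - τ)| ≤ (∫ t, |f t|) * ∫ t, |g t| := by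
  have hconv := integral_convolution (μ := volume) (ν := volume) (ContinuousLinearMap.mul ℝ ℝ)
    hf.abs hg.abs
  rw [ContinuousLinearMap.mul_apply'] at hconv
  rw [← hconv]
  refine integral_mono_of_nonneg (Eventually.of_forall fun t => abs_nonneg _)
    (hf.abs.integrable_convolution _ hg.abs) (Eventually.of_forall fun t => ?_)
  have habs := MeasureTheory.abs_integral_le_integral_abs (μ := volume)
    (f := fun τ => f τ * g (t - τ))
  simp only [abs_mul] at habs
  exact habs

theorem abs_integral_mul_sub_le {C M : ℝ} (hf : Integrable f) (hg : Integrable g)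
    (hf₀ : ∀ τ ≤ 0, f τ = 0) (hg₀ : ∀ τ ≤ 0, g τ = 0) (hM : 0 ≤ M)
    (hfM : ∀ τ, 0 < τ → t / 2 ≤ τ → |f τ| ≤ M) (hgM : ∀ τ, 0 < τ → t / 2 ≤ τ → |g τ| ≤ M)
    (hfC : ∫ τ, |f τ| ≤ C) (hgC : ∫ τ, |g τ| ≤ C) :
    |∫ τ, f τ * g (t - τ)| ≤ 2 * C * M := by
  have hle : ∀ τ, ‖f τ * g (t - τ)‖ ≤ M * (|f τ| + |g (t - τ)|) := fun τ => by
    rw [norm_mul, Real.norm_eq_abs, Real.norm_eq_abs]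
    rcases le_or_gt τ 0 with hτ | hτ
    · rw [hf₀ τ hτ, abs_zero, zero_mul]
      positivity
    rcases le_or_gt (t - τ) 0 with hτ' | hτ'
    · rw [hg₀ _ hτ', abs_zero, mul_zero]
      positivity
    rcases le_total (t / 2) τ with h | h
    · nlinarith [hfM τ hτ h, abs_nonneg (f τ), abs_nonneg (g (t - τ))]
    · nlinarith [hgM _ hτ' (by linarith), abs_nonneg (f τ), abs_nonneg (g (t - τ))]
  have hg' := (hg.comp_sub_left t).abs
  calc |∫ τ, f τ * g (t - τ)| ≤ ∫ τ, M * (|f τ| + |g (t - τ)|) :=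
        norm_integral_le_of_norm_le ((hf.abs.add hg').const_mul M) (Eventually.of_forall hle)
    _ = M * ((∫ τ, |f τ|) + ∫ τ, |g τ|) := by
        rw [MeasureTheory.integral_const_mul, MeasureTheory.integral_add hf.abs hg',
          integral_sub_left_eq_self (fun τ => |g τ|) volume t]
    _ ≤ M * (C + C) := by gcongr
    _ = 2 * C * M := by ring

theorem rpow_le_four_mul_rpow {u e : ℝ} (ht : 0 < t) (hu : t / 2 ≤ u) (he₂ : -2 ≤ e)
    (he₀ : e ≤ 0) : u ^ e ≤ 4 * t ^ e := by
  calc u ^ e ≤ (t / 2) ^ e := rpow_le_rpow_of_nonpos (by positivity) hu he₀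
    _ = 2 ^ (-e) * t ^ e := by
      rw [div_rpow ht.le two_pos.le, rpow_neg two_pos.le]
      field_simp
    _ ≤ 2 ^ (2 : ℝ) * t ^ e := by
      gcongr
      · norm_num
      · linarith
    _ = 4 * t ^ e := by norm_num

namespace IsSubordinatorFamily

variable {a b C : ℝ} {f g : ℝ → ℝ → ℝ} {p t : ℝ}

theorem measurable_convolution (hf : IsSubordinatorFamily a b C f)
    (hg : IsSubordinatorFamily a b C g) :
    Measurable (Function.uncurry fun p t => ∫ τ, f p τ * g p (t - τ)) := by
  have h : Measurable fun q : (ℝ × ℝ) × ℝ => f q.1.1 q.2 * g q.1.1 (q.1.2 - q.2) :=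
    (hf.measurable.comp (measurable_fst.fst.prodMk measurable_snd)).mul
      (hg.measurable.comp (measurable_fst.fst.prodMk (measurable_fst.snd.sub measurable_snd)))
  exact (h.stronglyMeasurable.integral_prod_right' (ν := volume)).measurable

theorem abs_convolution_le {B : ℝ → ℝ} (hf : IsSubordinatorFamily a b C f)
    (hg : IsSubordinatorFamily a b C g) (hp : 0 < p) (hfB : ∀ t, 0 < t → |f p t| ≤ C * B t)
    (hgB : ∀ t, 0 < t → |g p t| ≤ C * B t) (hB₀ : 0 ≤ B t)
    (hB : ∀ u, t / 2 ≤ u → B u ≤ 4 * B t) :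
    |∫ τ, f p τ * g p (t - τ)| ≤ 8 * C ^ 2 * B t := by
  have hC := hf.nonneg
  calc |∫ τ, f p τ * g p (t - τ)| ≤ 2 * C * (C * (4 * B t)) :=
        abs_integral_mul_sub_le (hf.integrable p hp) (hg.integrable p hp) (hf.eq_zero p)
          (hg.eq_zero p) (by positivity)
          (fun τ hτ h => (hfB τ hτ).trans (mul_le_mul_of_nonneg_left (hB τ h) hC))
          (fun τ hτ h => (hgB τ hτ).trans (mul_le_mul_of_nonneg_left (hB τ h) hC))
          (hf.integral_abs_le p hp) (hg.integral_abs_le p hp)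
    _ = 8 * C ^ 2 * B t := by ring

theorem convolution (hb : 0 < b) (hba : b ≤ a) (ha : a < 1) (hf : IsSubordinatorFamily a b C f)
    (hg : IsSubordinatorFamily a b C g) :
    IsSubordinatorFamily a b (8 * C ^ 2) fun p t => ∫ τ, f p τ * g p (t - τ) where
  nonneg := by positivity
  measurable := hf.measurable_convolution hg
  eq_zero p t := integral_mul_sub_eq_zero (hf.eq_zero p) (hg.eq_zero p)
  le_small p t hp ht := by
    refine hf.abs_convolution_le (B := fun t => p * (t ^ (-1 - a) + t ^ (-1 - b))) hg hp
      (fun τ => hf.le_small p τ hp) (fun τ => hg.le_small p τ hp) (by positivity) fun u hu => ?_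
    rw [mul_left_comm, mul_add 4]
    gcongr <;> exact rpow_le_four_mul_rpow ht hu (by linarith) (by linarith)
  le_mid p t hp ht := by
    refine hf.abs_convolution_le (B := fun t => t⁻¹) hg hp (fun τ => hf.le_mid p τ hp)
      (fun τ => hg.le_mid p τ hp) (by positivity) fun u hu => ?_
    simpa only [rpow_neg_one] using
      rpow_le_four_mul_rpow (e := -1) ht hu (by norm_num) (by norm_num)
  le_large p t hp ht := by
    refine hf.abs_convolution_le (B := fun t => p⁻¹ * (t ^ (a - 1) + t ^ (b - 1))) hg hp
      (fun τ => hf.le_large p τ hp) (fun τ => hg.le_large p τ hp) (by positivity) fun u hu => ?_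
    rw [mul_left_comm, mul_add 4]
    gcongr <;> exact rpow_le_four_mul_rpow ht hu (by linarith) (by linarith)
  integrable p hp := (hf.integrable p hp).integrable_convolution (ContinuousLinearMap.mul ℝ ℝ)
    (hg.integrable p hp)
  integral_abs_le p hp := by
    calc _ ≤ (∫ t, |f p t|) * ∫ t, |g p t| :=
          integral_abs_integral_mul_sub_le (hf.integrable p hp) (hg.integrable p hp)
      _ ≤ C * C := mul_le_mul (hf.integral_abs_le p hp) (hg.integral_abs_le p hp)
          (integral_nonneg fun _ => abs_nonneg _) hf.nonneg
      _ ≤ 8 * C ^ 2 := by nlinarith [sq_nonneg C]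
  integral_eq_one p hp := by
    have h := integral_convolution (μ := volume) (ν := volume) (ContinuousLinearMap.mul ℝ ℝ)
      (hf.integrable p hp) (hg.integrable p hp)
    rwa [ContinuousLinearMap.mul_apply', hf.integral_eq_one p hp, hg.integral_eq_one p hp,
      one_mul] at h

end IsSubordinatorFamily

end Convolution

theorem Sconv_zero_succ (n : ℕ) (α ℓ : Fin (n + 2) → ℝ) :
    Sconv (n + 1) 0 α ℓ = laplaceConv (Sconv n 0 (fun j => α j.castSucc) (fun j => ℓ j.castSucc))
      (fun t => t ^ (-1 : ℝ) * wrightW (α (Fin.last (n + 1))) 0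
        (-(ℓ (Fin.last (n + 1))) * t ^ (-(α (Fin.last (n + 1)))))) := by
  simp [Sconv, iterConv]

theorem exists_isSubordinatorFamily_Sconv {a b : ℝ} (hb : 0 < b) (ha : a < 1) (n : ℕ)
    (α lam : Fin (n + 1) → ℝ) (hαb : ∀ j, b ≤ α j) (hαa : ∀ j, α j ≤ a) (hlam : ∀ j, 0 < lam j) :
    ∃ C f, IsSubordinatorFamily a b C f ∧
      ∀ p t, 0 < p → 0 < t → Sconv n 0 α (fun j => lam j * p) t = f p t := by
  have hα₀ : ∀ j, 0 < α j := fun j => hb.trans_le (hαb j)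
  have hα₁ : ∀ j, α j < 1 := fun j => (hαa j).trans_lt ha
  induction n with
  | zero =>
    obtain ⟨C, hC⟩ :=
      exists_isSubordinatorFamily_wrightKernel (hα₀ 0) (hα₁ 0) (hαb 0) (hαa 0) (hlam 0)
    refine ⟨C, _, hC, fun p t hp ht => ?_⟩
    rw [← rpow_neg_one_mul_wrightW_eq_wrightKernel (hα₀ 0) (hα₁ 0) (hlam 0) hp ht]
    simp [Sconv, iterConv]
  | succ n ih =>
    obtain ⟨C, f, hf, hfS⟩ := ih (fun j => α j.castSucc) (fun j => lam j.castSucc)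
      (fun j => hαb _) (fun j => hαa _) (fun j => hlam _) (fun j => hα₀ _) (fun j => hα₁ _)
    set l := Fin.last (n + 1)
    obtain ⟨D, hD⟩ :=
      exists_isSubordinatorFamily_wrightKernel (hα₀ l) (hα₁ l) (hαb l) (hαa l) (hlam l)
    refine ⟨_, _, (hf.mono (le_max_left C D)).convolution hb ((hαb 0).trans (hαa 0)) ha
      (hD.mono (le_max_right C D)), fun p t hp ht => ?_⟩
    rw [Sconv_zero_succ]
    exact laplaceConv_eq_integral_mul_sub (fun τ hτ => hfS p τ hp hτ)
      (fun τ hτ => rpow_neg_one_mul_wrightW_eq_wrightKernel (hα₀ l) (hα₁ l) (hlam l) hp hτ)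
      (hf.eq_zero p) (hD.eq_zero p) ht.le

/-! ### Subordination of the heat kernel -/

theorem abs_integral_mul_le {X : Type*} [MeasurableSpace X] {μ : Measure X} {ω w : X → ℝ} {c : ℝ}
    (hw : Integrable w μ) (hω : ∀ᵐ p ∂μ, |ω p| ≤ c) :
    |∫ p, ω p * w p ∂μ| ≤ c * ∫ p, |w p| ∂μ := by
  rw [← MeasureTheory.integral_const_mul]
  refine (Real.norm_eq_abs _).symm.trans_le <|
    norm_integral_le_of_norm_le (hw.abs.const_mul c) (hω.mono fun p hp => ?_)
  rw [norm_mul, Real.norm_eq_abs, Real.norm_eq_abs]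
  gcongr

section MinWeight

variable {X Y : ℝ}

theorem rpow_neg_three_halves_mul_self {p : ℝ} (hp : 0 < p) :
    p ^ (-(3 / 2) : ℝ) * p = p ^ (-(1 / 2) : ℝ) := by
  rw [← rpow_add_one hp.ne']
  norm_num

theorem eqOn_rpow_mul_min_Ioc (hX : 0 < X) :
    EqOn (fun p => p ^ (-(3 / 2) : ℝ) * min (p * X) Y) (fun p => X * p ^ (-(1 / 2) : ℝ))
      (Ioc 0 (Y / X)) := fun p hp => by
  simp only
  rw [min_eq_left ((le_div_iff₀ hX).1 hp.2), ← rpow_neg_three_halves_mul_self hp.1]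
  ring

theorem eqOn_rpow_mul_min_Ioi (hX : 0 < X) :
    EqOn (fun p => p ^ (-(3 / 2) : ℝ) * min (p * X) Y) (fun p => Y * p ^ (-(3 / 2) : ℝ))
      (Ioi (Y / X)) := fun p hp => by
  simp only
  rw [min_eq_right ((div_lt_iff₀ hX).1 hp).le, mul_comm]

theorem integrableOn_Ioc_rpow_mul_min (hX : 0 < X) (hY : 0 < Y) :
    IntegrableOn (fun p => p ^ (-(3 / 2) : ℝ) * min (p * X) Y) (Ioc 0 (Y / X)) := by
  rw [integrableOn_congr_fun (eqOn_rpow_mul_min_Ioc hX) measurableSet_Ioc]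
  exact ((intervalIntegrable_iff_integrableOn_Ioc_of_le (by positivity)).1
    (intervalIntegrable_rpow' (by norm_num))).const_mul _

theorem integrableOn_Ioi_rpow_mul_min (hX : 0 < X) (hY : 0 < Y) :
    IntegrableOn (fun p => p ^ (-(3 / 2) : ℝ) * min (p * X) Y) (Ioi (Y / X)) := by
  rw [integrableOn_congr_fun (eqOn_rpow_mul_min_Ioi hX) measurableSet_Ioi]
  exact (integrableOn_Ioi_rpow_of_lt (by norm_num) (by positivity)).const_mul _

theorem integrableOn_rpow_mul_min (hX : 0 < X) (hY : 0 < Y) :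
    IntegrableOn (fun p => p ^ (-(3 / 2) : ℝ) * min (p * X) Y) (Ioi 0) := by
  rw [← Ioc_union_Ioi_eq_Ioi (div_pos hY hX).le]
  exact (integrableOn_Ioc_rpow_mul_min hX hY).union (integrableOn_Ioi_rpow_mul_min hX hY)

theorem integral_Ioc_rpow_mul_min (hX : 0 < X) (hY : 0 < Y) :
    ∫ p in Ioc 0 (Y / X), p ^ (-(3 / 2) : ℝ) * min (p * X) Y = 2 * √(X * Y) := by
  rw [setIntegral_congr_fun measurableSet_Ioc (eqOn_rpow_mul_min_Ioc hX),
    MeasureTheory.integral_const_mul, ← intervalIntegral.integral_of_le (by positivity),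
    integral_rpow (Or.inl (by norm_num))]
  norm_num
  rw [← sqrt_eq_rpow, sqrt_div' _ hX.le, sqrt_mul hX.le]
  field_simp
  rw [sq_sqrt hX.le]

theorem integral_Ioi_rpow_mul_min (hX : 0 < X) (hY : 0 < Y) :
    ∫ p in Ioi (Y / X), p ^ (-(3 / 2) : ℝ) * min (p * X) Y = 2 * √(X * Y) := by
  have hA : 0 < Y / X := by positivity
  rw [setIntegral_congr_fun measurableSet_Ioi (eqOn_rpow_mul_min_Ioi hX),
    MeasureTheory.integral_const_mul, integral_Ioi_rpow_of_lt (by norm_num) hA]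
  norm_num
  rw [rpow_neg hA.le, ← sqrt_eq_rpow, sqrt_div' _ hX.le, sqrt_mul hX.le]
  field_simp
  rw [sq_sqrt hY.le]

theorem integral_rpow_mul_min (hX : 0 < X) (hY : 0 < Y) :
    ∫ p in Ioi (0 : ℝ), p ^ (-(3 / 2) : ℝ) * min (p * X) Y = 4 * √(X * Y) := by
  rw [← Ioc_union_Ioi_eq_Ioi (div_pos hY hX).le,
    setIntegral_union (Ioc_disjoint_Ioi le_rfl) measurableSet_Ioi
      (integrableOn_Ioc_rpow_mul_min hX hY) (integrableOn_Ioi_rpow_mul_min hX hY),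
    integral_Ioc_rpow_mul_min hX hY, integral_Ioi_rpow_mul_min hX hY]
  ring

theorem norm_rpow_mul_le_min {z p : ℝ} (hp : 0 < p) (hzX : |z| ≤ p * X) (hzY : |z| ≤ Y) :
    ‖p ^ (-(3 / 2) : ℝ) * z‖ ≤ p ^ (-(3 / 2) : ℝ) * min (p * X) Y := by
  rw [norm_mul, norm_of_nonneg (by positivity), Real.norm_eq_abs]
  gcongr
  exact le_min hzX hzY

variable {g : ℝ → ℝ}

theorem integrableOn_rpow_mul_of_abs_le (hX : 0 < X) (hY : 0 < Y) (hg : Measurable g)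
    (hgX : ∀ p, 0 < p → |g p| ≤ p * X) (hgY : ∀ p, 0 < p → |g p| ≤ Y) :
    IntegrableOn (fun p => p ^ (-(3 / 2) : ℝ) * g p) (Ioi 0) :=
  (integrableOn_rpow_mul_min hX hY).mono' (Measurable.aestronglyMeasurable (by fun_prop)) <|
    (ae_restrict_mem measurableSet_Ioi).mono fun p hp =>
      norm_rpow_mul_le_min hp (hgX p hp) (hgY p hp)

theorem integral_abs_rpow_mul_le_of_abs_le (hX : 0 < X) (hY : 0 < Y) (hg : Measurable g)
    (hgX : ∀ p, 0 < p → |g p| ≤ p * X) (hgY : ∀ p, 0 < p → |g p| ≤ Y) :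
    ∫ p in Ioi (0 : ℝ), |p ^ (-(3 / 2) : ℝ) * g p| ≤ 4 * √(X * Y) := by
  rw [← integral_rpow_mul_min hX hY]
  exact setIntegral_mono_on (integrableOn_rpow_mul_of_abs_le hX hY hg hgX hgY).abs
    (integrableOn_rpow_mul_min hX hY) measurableSet_Ioi
    fun p hp => norm_rpow_mul_le_min hp (hgX p hp) (hgY p hp)

end MinWeight

theorem sqrt_mul_rpow_add_rpow_le {C t : ℝ} (hC : 0 ≤ C) (ht : 0 < t) (u v : ℝ) :
    √(C * (t ^ u + t ^ v) * (C * t⁻¹)) ≤ C * (t ^ ((u - 1) / 2) + t ^ ((v - 1) / 2)) := by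
  have hsq : ∀ w : ℝ, t ^ w * t⁻¹ = (t ^ ((w - 1) / 2)) ^ 2 := fun w => by
    rw [← rpow_neg_one, ← rpow_add ht, ← rpow_mul_natCast ht.le]
    ring_nf
  refine Real.sqrt_le_iff.2 ⟨by positivity, ?_⟩
  calc C * (t ^ u + t ^ v) * (C * t⁻¹)
      = C ^ 2 * (t ^ u * t⁻¹ + t ^ v * t⁻¹) := by ring
    _ = C ^ 2 * ((t ^ ((u - 1) / 2)) ^ 2 + (t ^ ((v - 1) / 2)) ^ 2) := by rw [hsq, hsq]
    _ ≤ C ^ 2 * (t ^ ((u - 1) / 2) + t ^ ((v - 1) / 2)) ^ 2 := by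
        gcongr
        nlinarith [rpow_pos_of_pos ht ((u - 1) / 2), rpow_pos_of_pos ht ((v - 1) / 2)]
    _ = (C * (t ^ ((u - 1) / 2) + t ^ ((v - 1) / 2))) ^ 2 := by ring

theorem integral_rpow_mul_exp_neg_div (c : ℝ) :
    ∫ p in Ioi (0 : ℝ), p ^ (-(3 / 2) : ℝ) * Real.exp (-c / p) = √(π / c) := by
  have h := MeasureTheory.integral_comp_rpow_Ioi (fun y : ℝ => Real.exp (-c * y ^ 2))
    (p := (-(1 / 2) : ℝ)) (by norm_num)
  have hsubst : ∀ p ∈ Ioi (0 : ℝ), (|(-(1 / 2) : ℝ)| * p ^ ((-(1 / 2) : ℝ) - 1)) •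
      Real.exp (-c * (p ^ (-(1 / 2) : ℝ)) ^ 2) =
        2⁻¹ * (p ^ (-(3 / 2) : ℝ) * Real.exp (-c / p)) := fun p hp => by
    rw [← rpow_mul_natCast (le_of_lt hp), smul_eq_mul]
    norm_num
    rw [rpow_neg_one, ← div_eq_mul_inv, ← neg_div]
    ring_nf
  rw [integral_gaussian_Ioi, setIntegral_congr_fun measurableSet_Ioi hsubst,
    MeasureTheory.integral_const_mul] at h
  linarith

theorem integrableOn_rpow_mul_exp_neg_div {c : ℝ} (hc : 0 < c) :
    IntegrableOn (fun p : ℝ => p ^ (-(3 / 2) : ℝ) * Real.exp (-c / p)) (Ioi 0) :=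
  not_imp_comm.1 integral_undef <| by
    rw [integral_rpow_mul_exp_neg_div]
    positivity

/-- The normalising constant of the one-dimensional heat kernel. -/
noncomputable def heatConst : ℝ := (4 * π) ^ (-(1 / 2) : ℝ)

theorem heatConst_pos : 0 < heatConst := by
  unfold heatConst
  positivity

theorem heatConst_le_one : heatConst ≤ 1 :=
  rpow_le_one_of_one_le_of_nonpos (by linarith [pi_gt_three]) (by norm_num)

theorem heatConst_mul_sqrt_pi_div (c : ℝ) : heatConst * √(π / c) = (2 * √c)⁻¹ := by
  have hpi : √π ≠ 0 := by positivity
  rw [heatConst, rpow_neg (by positivity), ← sqrt_eq_rpow, sqrt_mul (by norm_num),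
    show (4 : ℝ) = 2 ^ 2 by norm_num, sqrt_sq (by norm_num), sqrt_div pi_pos.le]
  field_simp

/-- The dipole profile `-(x/2) exp(-x²/(4 p))`; up to the factor `(4π)^{-1/2} p^{-3/2}` it is the
spatial derivative of the heat kernel at time `p`. -/
noncomputable def dipole (x p : ℝ) : ℝ := -(x / 2) * Real.exp (-(x ^ 2 / 4) / p)

section Dipole

variable {p : ℝ}

theorem measurable_uncurry_dipole : Measurable (Function.uncurry dipole) := by
  unfold Function.uncurry dipole
  fun_prop

theorem exp_neg_sq_div_le_one (hp : 0 < p) (x : ℝ) : Real.exp (-(x ^ 2 / 4) / p) ≤ 1 := by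
  rw [Real.exp_le_one_iff, neg_div]
  exact neg_nonpos.2 (by positivity)

theorem abs_dipole (x p : ℝ) : |dipole x p| = |x| / 2 * Real.exp (-(x ^ 2 / 4) / p) := by
  rw [dipole, abs_mul, abs_neg, abs_div, abs_two, Real.abs_exp]

theorem abs_dipole_le (hp : 0 < p) (x : ℝ) : |dipole x p| ≤ |x| / 2 := by
  rw [abs_dipole]
  exact mul_le_of_le_one_right (by positivity) (exp_neg_sq_div_le_one hp x)

theorem hasDerivAt_exp_neg_sq_div (p x : ℝ) :
    HasDerivAt (fun y => Real.exp (-(y ^ 2 / 4) / p))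
      (Real.exp (-(x ^ 2 / 4) / p) * (-(x / 2) / p)) x := by
  have h : HasDerivAt (fun y : ℝ => -(y ^ 2 / 4) / p) (-(x / 2) / p) x := by
    refine ((((hasDerivAt_pow 2 x).div_const 4).neg).div_const p).congr_deriv ?_
    norm_num
    ring
  exact h.exp

theorem hasDerivAt_exp_mul_rpow_mul (hp : 0 < p) (x z : ℝ) :
    HasDerivAt (fun y => Real.exp (-(y ^ 2 / 4) / p) * (p ^ (-(1 / 2) : ℝ) * z))
      (dipole x p * (p ^ (-(3 / 2) : ℝ) * z)) x := by
  refine ((hasDerivAt_exp_neg_sq_div p x).mul_const _).congr_deriv ?_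
  rw [← rpow_neg_three_halves_mul_self hp, dipole]
  field_simp

theorem hasDerivAt_dipole (p x : ℝ) :
    HasDerivAt (fun y => dipole y p) ((x ^ 2 / 4 / p - 1 / 2) * Real.exp (-(x ^ 2 / 4 / p))) x := by
  have hlin : HasDerivAt (fun y : ℝ => -(y / 2)) (-(1 / 2)) x :=
    ((hasDerivAt_id x).div_const 2).neg
  refine (hlin.mul (hasDerivAt_exp_neg_sq_div p x)).congr_deriv ?_
  rw [neg_div p (x ^ 2 / 4)]
  ring

theorem abs_sub_half_mul_exp_neg_le_one {u : ℝ} (hu : 0 ≤ u) :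
    |(u - 1 / 2) * Real.exp (-u)| ≤ 1 := by
  rw [abs_mul, Real.abs_exp, Real.exp_neg, ← div_eq_mul_inv, div_le_one (Real.exp_pos u)]
  exact (abs_le.2 ⟨by linarith, by linarith⟩).trans (Real.add_one_le_exp u)

theorem abs_dipole_sub_le (hp : 0 < p) (x y : ℝ) : |dipole x p - dipole y p| ≤ |x - y| := by
  simpa using Convex.norm_image_sub_le_of_norm_hasDerivWithin_le (C := 1)
    (fun z _ => (hasDerivAt_dipole p z).hasDerivWithinAt)
    (fun z _ => abs_sub_half_mul_exp_neg_le_one (by positivity)) convex_univ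
    (mem_univ y) (mem_univ x)

theorem abs_dipole_le_mul_exp (hp : 0 < p) {x : ℝ} (hx : x ≠ 0) :
    |dipole x p| ≤ 4 / |x| * (p * Real.exp (-(x ^ 2 / 8) / p)) := by
  have hu : 0 < x ^ 2 / 8 / p := by positivity
  calc |dipole x p| = |x| / 2 * (Real.exp (-(x ^ 2 / 8 / p)) * Real.exp (-(x ^ 2 / 8) / p)) := by
        rw [abs_dipole, ← Real.exp_add]
        ring_nf
    _ ≤ |x| / 2 * ((x ^ 2 / 8 / p)⁻¹ * Real.exp (-(x ^ 2 / 8) / p)) := by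
        gcongr
        exact exp_neg_le_inv hu
    _ = 4 / |x| * (p * Real.exp (-(x ^ 2 / 8) / p)) := by
        have := abs_pos.2 hx
        rw [← sq_abs x]
        field_simp
        norm_num

end Dipole

/-- The kernel `(4π)^{-1/2} ∫₀^∞ p^{-1/2} exp(-x²/(4 p)) f(p, t) dp`, obtained by subordinating the
heat kernel to the densities `f p`. -/
noncomputable def subordE (f : ℝ → ℝ → ℝ) (x t : ℝ) : ℝ :=
  heatConst * ∫ p in Ioi (0 : ℝ), Real.exp (-(x ^ 2 / 4) / p) * (p ^ (-(1 / 2) : ℝ) * f p t)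

/-- The spatial derivative of `subordE f`. -/
noncomputable def subordK (f : ℝ → ℝ → ℝ) (x t : ℝ) : ℝ :=
  heatConst * ∫ p in Ioi (0 : ℝ), dipole x p * (p ^ (-(3 / 2) : ℝ) * f p t)

/-- The properties of a kernel `E` and its spatial derivative `K = E_x` that produce the jump
relation; `b` and `a` stand for the smallest and the largest of the orders `αⱼ`. -/
structure IsJumpKernel (a b C : ℝ) (E K : ℝ → ℝ → ℝ) : Prop where
  nonneg : 0 ≤ C
  measurable : Measurable (Function.uncurry E)
  measurable_deriv : Measurable (Function.uncurry K)
  hasDerivAt : ∀ x t, 0 < t → HasDerivAt (fun y => E y t) (K x t) x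
  abs_le : ∀ x t, 0 < t → |E x t| ≤ C * (t ^ (a / 2 - 1) + t ^ (b / 2 - 1))
  abs_sub_le : ∀ x y t, 0 < t →
    |K x t - K y t| ≤ C * |x - y| * (t ^ (-1 - a / 2) + t ^ (-1 - b / 2))
  zero_left : ∀ t, K 0 t = 0
  abs_le_of_ne : ∀ x t, x ≠ 0 → 0 < t → |K x t| ≤ C * (x ^ 2)⁻¹ * (t ^ (a - 1) + t ^ (b - 1))
  integrableOn : ∀ x, x ≠ 0 → IntegrableOn (K x) (Ioi 0)
  integral_abs_le : ∀ x, x ≠ 0 → ∫ t in Ioi (0 : ℝ), |K x t| ≤ C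
  integral_eq : ∀ x, x ≠ 0 → ∫ t in Ioi (0 : ℝ), K x t = -(x / |x|) / 2

theorem measurable_uncurry_integral_mul_rpow_mul {ω f : ℝ → ℝ → ℝ}
    (hω : Measurable (Function.uncurry ω)) (hf : Measurable (Function.uncurry f)) (e : ℝ) :
    Measurable (Function.uncurry fun x t => ∫ p in Ioi (0 : ℝ), ω x p * (p ^ e * f p t)) := by
  have hωq : Measurable fun q : (ℝ × ℝ) × ℝ => ω q.1.1 q.2 :=
    hω.comp (measurable_fst.fst.prodMk measurable_snd)
  have hfq : Measurable fun q : (ℝ × ℝ) × ℝ => f q.2 q.1.2 :=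
    hf.comp (measurable_snd.prodMk measurable_fst.snd)
  have hq : Measurable fun q : (ℝ × ℝ) × ℝ => ω q.1.1 q.2 * (q.2 ^ e * f q.2 q.1.2) :=
    hωq.mul ((measurable_snd.pow_const e).mul hfq)
  exact (hq.stronglyMeasurable.integral_prod_right'
    (ν := volume.restrict (Ioi (0 : ℝ)))).measurable

theorem measurable_uncurry_subordE {f : ℝ → ℝ → ℝ} (hf : Measurable (Function.uncurry f)) :
    Measurable (Function.uncurry (subordE f)) :=
  (measurable_uncurry_integral_mul_rpow_mul (ω := fun x p => Real.exp (-(x ^ 2 / 4) / p))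
    (by unfold Function.uncurry; fun_prop) hf _).const_mul heatConst

theorem measurable_uncurry_subordK {f : ℝ → ℝ → ℝ} (hf : Measurable (Function.uncurry f)) :
    Measurable (Function.uncurry (subordK f)) :=
  (measurable_uncurry_integral_mul_rpow_mul measurable_uncurry_dipole hf _).const_mul heatConst

theorem abs_heatConst_mul_le {z c : ℝ} (h : |z| ≤ c) : |heatConst * z| ≤ c := by
  rw [abs_mul, abs_of_pos heatConst_pos]
  exact (mul_le_of_le_one_left (abs_nonneg z) heatConst_le_one).trans h

namespace IsSubordinatorFamily

variable {a b C x t : ℝ} {f : ℝ → ℝ → ℝ}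

theorem measurable_right (h : IsSubordinatorFamily a b C f) (t : ℝ) : Measurable fun p => f p t :=
  h.measurable.of_uncurry_right

theorem pos (h : IsSubordinatorFamily a b C f) : 0 < C :=
  one_pos.trans_le <| by
    rw [← h.integral_eq_one 1 one_pos]
    exact (le_abs_self _).trans
      (MeasureTheory.abs_integral_le_integral_abs.trans (h.integral_abs_le 1 one_pos))

theorem abs_le_mul_small (h : IsSubordinatorFamily a b C f) (ht : 0 < t) (p : ℝ) (hp : 0 < p) :
    |f p t| ≤ p * (C * (t ^ (-1 - a) + t ^ (-1 - b))) :=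
  (h.le_small p t hp ht).trans_eq (by ring)

theorem abs_mul_le_mid (h : IsSubordinatorFamily a b C f) (ht : 0 < t) (p : ℝ) (hp : 0 < p) :
    |p * f p t| ≤ p * (C * t⁻¹) := by
  rw [abs_mul, abs_of_pos hp]
  gcongr
  exact h.le_mid p t hp ht

theorem abs_mul_le_large (h : IsSubordinatorFamily a b C f) (ht : 0 < t) (p : ℝ) (hp : 0 < p) :
    |p * f p t| ≤ C * (t ^ (a - 1) + t ^ (b - 1)) := by
  rw [abs_mul, abs_of_pos hp]
  calc p * |f p t| ≤ p * (C * (p⁻¹ * (t ^ (a - 1) + t ^ (b - 1)))) := by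
        gcongr
        exact h.le_large p t hp ht
    _ = C * (t ^ (a - 1) + t ^ (b - 1)) := by field_simp

theorem eqOn_rpow_mul_mul (f : ℝ → ℝ → ℝ) (t : ℝ) :
    EqOn (fun p => p ^ (-(3 / 2) : ℝ) * (p * f p t)) (fun p => p ^ (-(1 / 2) : ℝ) * f p t)
      (Ioi 0) := fun p hp => by
  simp only
  rw [← mul_assoc, rpow_neg_three_halves_mul_self hp]

theorem integrableOn_rpow_neg_three_halves_mul (h : IsSubordinatorFamily a b C f) (ht : 0 < t) :
    IntegrableOn (fun p => p ^ (-(3 / 2) : ℝ) * f p t) (Ioi 0) :=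
  have := h.pos
  integrableOn_rpow_mul_of_abs_le (by positivity) (by positivity) (h.measurable_right t)
    (h.abs_le_mul_small ht) (fun p hp => h.le_mid p t hp ht)

theorem integral_abs_rpow_neg_three_halves_mul_le (h : IsSubordinatorFamily a b C f)
    (ht : 0 < t) : ∫ p in Ioi (0 : ℝ), |p ^ (-(3 / 2) : ℝ) * f p t| ≤
      4 * (C * (t ^ (-1 - a / 2) + t ^ (-1 - b / 2))) := by
  have hC := h.pos
  refine (integral_abs_rpow_mul_le_of_abs_le (by positivity) (by positivity)
    (h.measurable_right t) (h.abs_le_mul_small ht) (fun p hp => h.le_mid p t hp ht)).trans ?_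
  gcongr
  refine (sqrt_mul_rpow_add_rpow_le hC.le ht _ _).trans_eq ?_
  ring_nf

theorem integrableOn_rpow_neg_half_mul (h : IsSubordinatorFamily a b C f) (ht : 0 < t) :
    IntegrableOn (fun p => p ^ (-(1 / 2) : ℝ) * f p t) (Ioi 0) := by
  have := h.pos
  rw [← integrableOn_congr_fun (eqOn_rpow_mul_mul f t) measurableSet_Ioi]
  exact integrableOn_rpow_mul_of_abs_le (by positivity) (by positivity)
    (measurable_id.mul (h.measurable_right t)) (h.abs_mul_le_mid ht) (h.abs_mul_le_large ht)

theorem integral_abs_rpow_neg_half_mul_le (h : IsSubordinatorFamily a b C f) (ht : 0 < t) :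
    ∫ p in Ioi (0 : ℝ), |p ^ (-(1 / 2) : ℝ) * f p t| ≤
      4 * (C * (t ^ (a / 2 - 1) + t ^ (b / 2 - 1))) := by
  have hC := h.pos
  rw [← setIntegral_congr_fun measurableSet_Ioi
    fun p hp => congrArg abs (eqOn_rpow_mul_mul f t hp)]
  refine (integral_abs_rpow_mul_le_of_abs_le (by positivity) (by positivity)
    (measurable_id.mul (h.measurable_right t)) (h.abs_mul_le_mid ht)
    (h.abs_mul_le_large ht)).trans ?_
  rw [mul_comm (C * t⁻¹)]
  gcongr
  refine (sqrt_mul_rpow_add_rpow_le hC.le ht _ _).trans_eq ?_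
  ring_nf

theorem integrableOn_exp_mul (h : IsSubordinatorFamily a b C f) (ht : 0 < t) (x : ℝ) :
    IntegrableOn (fun p => Real.exp (-(x ^ 2 / 4) / p) * (p ^ (-(1 / 2) : ℝ) * f p t))
      (Ioi 0) :=
  (h.integrableOn_rpow_neg_half_mul ht).bdd_mul (c := 1)
    (Measurable.aestronglyMeasurable (by fun_prop))
    ((ae_restrict_mem measurableSet_Ioi).mono fun p hp => by
      rw [norm_of_nonneg (Real.exp_pos _).le]
      exact exp_neg_sq_div_le_one hp x)

theorem integrableOn_dipole_mul (h : IsSubordinatorFamily a b C f) (ht : 0 < t) (x : ℝ) :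
    IntegrableOn (fun p => dipole x p * (p ^ (-(3 / 2) : ℝ) * f p t)) (Ioi 0) :=
  (h.integrableOn_rpow_neg_three_halves_mul ht).bdd_mul
    measurable_uncurry_dipole.of_uncurry_left.aestronglyMeasurable
    ((ae_restrict_mem measurableSet_Ioi).mono fun _ hp => abs_dipole_le hp x)

theorem abs_subordE_le (h : IsSubordinatorFamily a b C f) (x : ℝ) (ht : 0 < t) :
    |subordE f x t| ≤ 4 * (C * (t ^ (a / 2 - 1) + t ^ (b / 2 - 1))) := by
  refine abs_heatConst_mul_le <|
    (abs_integral_mul_le (c := 1) (h.integrableOn_rpow_neg_half_mul ht) ?_).trans ?_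
  · refine (ae_restrict_mem measurableSet_Ioi).mono fun p hp => ?_
    rw [Real.abs_exp]
    exact exp_neg_sq_div_le_one hp x
  · rw [one_mul]
    exact h.integral_abs_rpow_neg_half_mul_le ht

theorem abs_subordK_sub_le (h : IsSubordinatorFamily a b C f) (x y : ℝ) (ht : 0 < t) :
    |subordK f x t - subordK f y t| ≤
      |x - y| * (4 * (C * (t ^ (-1 - a / 2) + t ^ (-1 - b / 2)))) := by
  rw [subordK, subordK, ← mul_sub, ← MeasureTheory.integral_sub (h.integrableOn_dipole_mul ht x)
    (h.integrableOn_dipole_mul ht y)]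
  simp_rw [← sub_mul]
  refine abs_heatConst_mul_le <|
    (abs_integral_mul_le (h.integrableOn_rpow_neg_three_halves_mul ht)
      ((ae_restrict_mem measurableSet_Ioi).mono fun p hp => abs_dipole_sub_le hp x y)).trans ?_
  gcongr
  exact h.integral_abs_rpow_neg_three_halves_mul_le ht

theorem hasDerivAt_subordE (h : IsSubordinatorFamily a b C f) (x : ℝ) (ht : 0 < t) :
    HasDerivAt (fun y => subordE f y t) (subordK f x t) x := by
  refine (hasDerivAt_integral_of_dominated_loc_of_deriv_le
    (bound := fun p => (|x| + 1) / 2 * |p ^ (-(3 / 2) : ℝ) * f p t|)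
    (Metric.ball_mem_nhds x one_pos)
    (Eventually.of_forall fun y => (h.integrableOn_exp_mul ht y).aestronglyMeasurable)
    (h.integrableOn_exp_mul ht x) (h.integrableOn_dipole_mul ht x).aestronglyMeasurable
    ((ae_restrict_mem measurableSet_Ioi).mono fun p hp y hy => ?_)
    ((h.integrableOn_rpow_neg_three_halves_mul ht).abs.const_mul _)
    ((ae_restrict_mem measurableSet_Ioi).mono fun p hp y _ =>
      hasDerivAt_exp_mul_rpow_mul hp y _)).2.const_mul _
  have hy' : |y| ≤ |x| + 1 := by
    have hyx : |y - x| < 1 := hy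
    linarith [abs_sub_abs_le_abs_sub y x]
  rw [Real.norm_eq_abs, abs_mul]
  gcongr
  exact (abs_dipole_le hp y).trans (by gcongr)

theorem abs_subordK_le (h : IsSubordinatorFamily a b C f) (hx : x ≠ 0) (ht : 0 < t) :
    |subordK f x t| ≤ 6 * C * (x ^ 2)⁻¹ * (t ^ (a - 1) + t ^ (b - 1)) := by
  have hC := h.pos
  set ν := t ^ (a - 1) + t ^ (b - 1)
  have hν : 0 < ν := by positivity
  have : 0 < |x| := abs_pos.2 hx
  have hbound : ∀ᵐ p ∂volume.restrict (Ioi (0 : ℝ)),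
      ‖dipole x p * (p ^ (-(3 / 2) : ℝ) * f p t)‖ ≤
        4 / |x| * (C * ν) * (p ^ (-(3 / 2) : ℝ) * Real.exp (-(x ^ 2 / 8) / p)) := by
    refine (ae_restrict_mem measurableSet_Ioi).mono fun p (hp : 0 < p) => ?_
    rw [norm_mul, norm_mul, norm_of_nonneg (rpow_nonneg hp.le _)]
    calc |dipole x p| * (p ^ (-(3 / 2) : ℝ) * |f p t|)
        ≤ 4 / |x| * (p * Real.exp (-(x ^ 2 / 8) / p)) *
            (p ^ (-(3 / 2) : ℝ) * (C * (p⁻¹ * ν))) := by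
          gcongr
          · exact abs_dipole_le_mul_exp hp hx
          · exact h.le_large p t hp ht
      _ = 4 / |x| * (C * ν) * (p ^ (-(3 / 2) : ℝ) * Real.exp (-(x ^ 2 / 8) / p)) := by
          field_simp
  have hint := norm_integral_le_of_norm_le
    ((integrableOn_rpow_mul_exp_neg_div (c := x ^ 2 / 8) (by positivity)).const_mul _) hbound
  rw [MeasureTheory.integral_const_mul, integral_rpow_mul_exp_neg_div, Real.norm_eq_abs] at hint
  have hsqrt : |x| / 3 ≤ √(x ^ 2 / 8) := le_sqrt_of_sq_le (by
    rw [div_pow, sq_abs]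
    linarith [sq_nonneg x])
  calc |subordK f x t| ≤ heatConst * (4 / |x| * (C * ν) * √(π / (x ^ 2 / 8))) := by
        rw [subordK, abs_mul, abs_of_pos heatConst_pos]
        exact mul_le_mul_of_nonneg_left hint heatConst_pos.le
    _ = 4 / |x| * (C * ν) * (2 * √(x ^ 2 / 8))⁻¹ := by
        rw [← heatConst_mul_sqrt_pi_div]
        ring
    _ ≤ 4 / |x| * (C * ν) * (2 * (|x| / 3))⁻¹ := by gcongr
    _ = 6 * C * (x ^ 2)⁻¹ * ν := by
        rw [← sq_abs x]
        field_simp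
        norm_num

theorem integral_abs_dipole_mul_le (h : IsSubordinatorFamily a b C f) {p : ℝ} (hp : 0 < p)
    (x : ℝ) : ∫ t in Ioi (0 : ℝ), |dipole x p * (p ^ (-(3 / 2) : ℝ) * f p t)| ≤
      C * (|x| / 2) * (p ^ (-(3 / 2) : ℝ) * Real.exp (-(x ^ 2 / 4) / p)) := by
  have hf : ∫ t in Ioi (0 : ℝ), |f p t| ≤ C :=
    (setIntegral_le_integral (h.integrable p hp).abs (ae_of_all _ fun _ => abs_nonneg _)).trans
      (h.integral_abs_le p hp)
  simp_rw [abs_mul, MeasureTheory.integral_const_mul]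
  rw [abs_dipole, abs_of_pos (rpow_pos_of_pos hp _)]
  calc |x| / 2 * Real.exp (-(x ^ 2 / 4) / p) * (p ^ (-(3 / 2) : ℝ) * ∫ t in Ioi 0, |f p t|)
      ≤ |x| / 2 * Real.exp (-(x ^ 2 / 4) / p) * (p ^ (-(3 / 2) : ℝ) * C) := by gcongr
    _ = C * (|x| / 2) * (p ^ (-(3 / 2) : ℝ) * Real.exp (-(x ^ 2 / 4) / p)) := by ring

theorem integrable_uncurry_dipole_mul (h : IsSubordinatorFamily a b C f) (hx : x ≠ 0) :
    Integrable (Function.uncurry fun p t => dipole x p * (p ^ (-(3 / 2) : ℝ) * f p t))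
      ((volume.restrict (Ioi 0)).prod (volume.restrict (Ioi 0))) := by
  have hm : Measurable (Function.uncurry fun p t => dipole x p * (p ^ (-(3 / 2) : ℝ) * f p t)) :=
    (measurable_uncurry_dipole.of_uncurry_left.comp measurable_fst).mul
      ((measurable_fst.pow_const _).mul h.measurable)
  refine (integrable_prod_iff hm.aestronglyMeasurable).2
    ⟨(ae_restrict_mem measurableSet_Ioi).mono fun p hp =>
      (((h.integrable p hp).integrableOn (s := Ioi 0)).const_mul (p ^ (-(3 / 2) : ℝ))).const_mul
        (dipole x p), ?_⟩
  refine ((integrableOn_rpow_mul_exp_neg_div (c := x ^ 2 / 4) (by positivity)).const_mul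
    (C * (|x| / 2))).mono' ?_ ((ae_restrict_mem measurableSet_Ioi).mono fun p hp => ?_)
  · exact (hm.norm.stronglyMeasurable.integral_prod_right'
      (ν := volume.restrict (Ioi (0 : ℝ)))).aestronglyMeasurable
  · rw [norm_of_nonneg (integral_nonneg fun _ => norm_nonneg _)]
    exact h.integral_abs_dipole_mul_le hp x

theorem integrableOn_subordK (h : IsSubordinatorFamily a b C f) (hx : x ≠ 0) :
    IntegrableOn (subordK f x) (Ioi 0) :=
  (h.integrable_uncurry_dipole_mul hx).integral_prod_right.const_mul heatConst

theorem heatConst_mul_sqrt_pi_div_sq (x : ℝ) : heatConst * √(π / (x ^ 2 / 4)) = |x|⁻¹ := by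
  rw [heatConst_mul_sqrt_pi_div, show x ^ 2 / 4 = (x / 2) ^ 2 by ring, sqrt_sq_eq_abs, abs_div,
    abs_two]
  field_simp

theorem integral_abs_subordK_le (h : IsSubordinatorFamily a b C f) (hx : x ≠ 0) :
    ∫ t in Ioi (0 : ℝ), |subordK f x t| ≤ C := by
  have hprod := (h.integrable_uncurry_dipole_mul hx).abs
  have hC := h.pos
  have hx' := abs_pos.2 hx
  calc ∫ t in Ioi (0 : ℝ), |subordK f x t|
      ≤ ∫ t in Ioi (0 : ℝ), heatConst *
          ∫ p in Ioi (0 : ℝ), |dipole x p * (p ^ (-(3 / 2) : ℝ) * f p t)| := by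
        refine integral_mono (h.integrableOn_subordK hx).abs
          (hprod.integral_prod_right.const_mul _) fun t => ?_
        simp only [subordK]
        rw [abs_mul, abs_of_pos heatConst_pos]
        exact mul_le_mul_of_nonneg_left MeasureTheory.abs_integral_le_integral_abs heatConst_pos.le
    _ = heatConst * ∫ p in Ioi (0 : ℝ), ∫ t in Ioi (0 : ℝ),
          |dipole x p * (p ^ (-(3 / 2) : ℝ) * f p t)| := by
        rw [MeasureTheory.integral_const_mul, ← integral_integral_swap hprod]
    _ ≤ heatConst * (C * (|x| / 2) * √(π / (x ^ 2 / 4))) := by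
        rw [← integral_rpow_mul_exp_neg_div,
          ← MeasureTheory.integral_const_mul (C * (|x| / 2))]
        refine mul_le_mul_of_nonneg_left (setIntegral_mono_on hprod.integral_prod_left
          ((integrableOn_rpow_mul_exp_neg_div (by positivity)).const_mul _) measurableSet_Ioi
          fun p hp => h.integral_abs_dipole_mul_le hp x) heatConst_pos.le
    _ = C / 2 * (|x| * |x|⁻¹) := by
        rw [← heatConst_mul_sqrt_pi_div_sq]
        ring
    _ ≤ C := by
        rw [mul_inv_cancel₀ hx'.ne']
        linarith

theorem integral_subordK (h : IsSubordinatorFamily a b C f) (hx : x ≠ 0) :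
    ∫ t in Ioi (0 : ℝ), subordK f x t = -(x / |x|) / 2 := by
  have hmass : ∀ p ∈ Ioi (0 : ℝ), ∫ t in Ioi (0 : ℝ), dipole x p * (p ^ (-(3 / 2) : ℝ) * f p t) =
      -(x / 2) * (p ^ (-(3 / 2) : ℝ) * Real.exp (-(x ^ 2 / 4) / p)) := fun p hp => by
    rw [MeasureTheory.integral_const_mul, MeasureTheory.integral_const_mul,
      setIntegral_eq_integral_of_forall_compl_eq_zero (s := Ioi 0)
        fun t ht => h.eq_zero p t (not_lt.1 ht),
      h.integral_eq_one p hp, dipole]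
    ring
  simp only [subordK]
  rw [MeasureTheory.integral_const_mul,
    ← integral_integral_swap (h.integrable_uncurry_dipole_mul hx),
    setIntegral_congr_fun measurableSet_Ioi hmass, MeasureTheory.integral_const_mul,
    integral_rpow_mul_exp_neg_div, mul_left_comm, heatConst_mul_sqrt_pi_div_sq]
  ring

theorem isJumpKernel (h : IsSubordinatorFamily a b C f) :
    IsJumpKernel a b (6 * C) (subordE f) (subordK f) where
  nonneg := by linarith [h.nonneg]
  measurable := measurable_uncurry_subordE h.measurable
  measurable_deriv := measurable_uncurry_subordK h.measurable
  hasDerivAt x t ht := h.hasDerivAt_subordE x ht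
  abs_le x t ht := (h.abs_subordE_le x ht).trans (by
    have : 0 ≤ C * (t ^ (a / 2 - 1) + t ^ (b / 2 - 1)) := mul_nonneg h.nonneg (by positivity)
    linarith)
  abs_sub_le x y t ht := (h.abs_subordK_sub_le x y ht).trans (by
    have : 0 ≤ C * |x - y| * (t ^ (-1 - a / 2) + t ^ (-1 - b / 2)) :=
      mul_nonneg (mul_nonneg h.nonneg (abs_nonneg _)) (by positivity)
    linarith)
  zero_left t := by simp [subordK, dipole]
  abs_le_of_ne x t hx ht := h.abs_subordK_le hx ht
  integrableOn x hx := h.integrableOn_subordK hx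
  integral_abs_le x hx := (h.integral_abs_subordK_le hx).trans (by linarith [h.nonneg])
  integral_eq x hx := h.integral_subordK hx

end IsSubordinatorFamily

theorem kerE_eq_subordE {n : ℕ} {α lam : Fin (n + 1) → ℝ} {f : ℝ → ℝ → ℝ} {t : ℝ}
    (hf : ∀ p, 0 < p → Sconv n 0 α (fun j => lam j * p) t = f p t) (x : ℝ) :
    kerE n α lam x t = subordE f x t := by
  rw [kerE, Gam1, subordE, heatConst]
  congr 1
  refine setIntegral_congr_fun measurableSet_Ioi fun p hp => ?_
  simp only [hf p hp, sq_abs, neg_div, div_div]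
  ring

/-! ### Layer potentials in the time lag -/

section LagIntegrals

variable {g σ : ℝ → ℝ} {c t : ℝ}

theorem rpow_le_rpow_add_rpow_of_mem_Icc {d r t : ℝ} (hd : 0 < d) (hr : r ∈ Icc d t) (v : ℝ) :
    r ^ v ≤ d ^ v + t ^ v := by
  have hr₀ : 0 < r := hd.trans_le hr.1
  have ht : 0 < t := hr₀.trans_le hr.2
  rcases le_total 0 v with hv | hv
  · exact (rpow_le_rpow hr₀.le hr.2 hv).trans (le_add_of_nonneg_left (by positivity))
  · exact (rpow_le_rpow_of_nonpos hd hr.1 hv).trans (le_add_of_nonneg_right (by positivity))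

theorem exists_forall_Ioo_abs_sub_lt (hg : Tendsto g (𝓝[>] 0) (𝓝 c)) {ε : ℝ} (hε : 0 < ε) :
    ∃ d > 0, ∀ r ∈ Ioo 0 d, |g r - c| < ε :=
  mem_nhdsGT_iff_exists_Ioo_subset.1 (Metric.tendsto_nhds.1 hg ε hε)

theorem integrableOn_mul_rpow (hg : IntegrableOn g (Ioc 0 t)) (hg₀ : Tendsto g (𝓝[>] 0) (𝓝 c))
    {v : ℝ} (hv : -1 < v) : IntegrableOn (fun r => g r * r ^ v) (Ioc 0 t) := by
  obtain ⟨d, hd, hgd⟩ := exists_forall_Ioo_abs_sub_lt hg₀ one_pos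
  have hpow : IntegrableOn (fun r : ℝ => r ^ v) (Ioc 0 t) := (intervalIntegrable_rpow' hv).1
  refine ((hpow.const_mul (|c| + 1)).add (hg.norm.mul_const (d ^ v + t ^ v))).mono'
    (hg.aestronglyMeasurable.mul (Measurable.aestronglyMeasurable (by fun_prop)))
    ((ae_restrict_mem measurableSet_Ioc).mono fun r hr => ?_)
  have ht : 0 < t := hr.1.trans_le hr.2
  have hr₀ := rpow_pos_of_pos hr.1 v
  simp only [Pi.add_apply]
  rw [norm_mul, norm_of_nonneg hr₀.le]
  rcases lt_or_ge r d with hrd | hrd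
  · have hgr : ‖g r‖ ≤ |c| + 1 := by
      rw [Real.norm_eq_abs]
      linarith [hgd r ⟨hr.1, hrd⟩, abs_sub_abs_le_abs_sub (g r) c]
    exact (mul_le_mul_of_nonneg_right hgr hr₀.le).trans (le_add_of_nonneg_right (by positivity))
  · exact (mul_le_mul_of_nonneg_left (rpow_le_rpow_add_rpow_of_mem_Icc hd ⟨hrd, hr.2⟩ v)
      (norm_nonneg _)).trans (le_add_of_nonneg_left (by positivity))

theorem integrableOn_mul_rpow_add_rpow (hg : IntegrableOn g (Ioc 0 t))
    (hg₀ : Tendsto g (𝓝[>] 0) (𝓝 c)) {u v : ℝ} (hu : -1 < u) (hv : -1 < v) (D : ℝ) :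
    IntegrableOn (fun r => |g r| * (D * (r ^ u + r ^ v))) (Ioc 0 t) := by
  refine IntegrableOn.congr_fun (((integrableOn_mul_rpow hg.abs hg₀.abs hu).add
    (integrableOn_mul_rpow hg.abs hg₀.abs hv)).const_mul D) (fun r _ => ?_) measurableSet_Ioc
  simp only [Pi.add_apply]
  ring

theorem integrableOn_mul_of_abs_le_rpow_add_rpow (hg : IntegrableOn g (Ioc 0 t))
    (hg₀ : Tendsto g (𝓝[>] 0) (𝓝 c)) {u v D : ℝ} (hu : -1 < u) (hv : -1 < v) {k : ℝ → ℝ}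
    (hk : AEStronglyMeasurable k (volume.restrict (Ioc 0 t)))
    (hkD : ∀ r ∈ Ioc 0 t, |k r| ≤ D * (r ^ u + r ^ v)) :
    IntegrableOn (fun r => g r * k r) (Ioc 0 t) :=
  (integrableOn_mul_rpow_add_rpow hg hg₀ hu hv D).mono' (hg.aestronglyMeasurable.mul hk)
    ((ae_restrict_mem measurableSet_Ioc).mono fun r hr => by
      rw [norm_mul, Real.norm_eq_abs, Real.norm_eq_abs]
      gcongr
      exact hkD r hr)

theorem aestronglyMeasurable_comp_sub {μ : Measure ℝ} {k : ℝ → ℝ → ℝ}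
    (hk : Measurable (Function.uncurry k)) (hσ : AEMeasurable σ μ) (x : ℝ) :
    AEStronglyMeasurable (fun r => k (x - σ r) r) μ :=
  (hk.comp_aemeasurable ((aemeasurable_const.sub hσ).prodMk aemeasurable_id)).aestronglyMeasurable

theorem abs_integral_Ioi_mul_le {ρ k M : ℝ → ℝ} {d e w : ℝ} (hd : 0 ≤ d) (he : 0 ≤ e)
    (hk : IntegrableOn k (Ioi 0)) (hρ : ∀ r ∈ Ioc 0 d, |ρ r| ≤ e)
    (hw : 0 ≤ w) (hkM : ∀ r, 0 < r → |k r| ≤ w * M r)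
    (hM : IntegrableOn (fun r => ρ r * M r) (Ioi d)) :
    |∫ r in Ioi (0 : ℝ), ρ r * k r| ≤
      (e * ∫ r in Ioi (0 : ℝ), |k r|) + w * ∫ r in Ioi d, |ρ r * M r| := by
  have hnear : IntegrableOn (fun r => e * |k r|) (Ioi 0) := hk.abs.const_mul e
  have hfar : IntegrableOn ((Ioi d).indicator fun r => w * |ρ r * M r|) (Ioi 0) :=
    (IntegrableOn.integrable_indicator (hM.abs.const_mul w) measurableSet_Ioi).integrableOn
  have hle := norm_integral_le_of_norm_le (hnear.add hfar) (f := fun r => ρ r * k r)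
    ((ae_restrict_mem measurableSet_Ioi).mono fun r (hr : 0 < r) => ?_)
  · rwa [integral_add' hnear hfar, setIntegral_indicator measurableSet_Ioi,
      inter_eq_right.2 (Ioi_subset_Ioi hd), MeasureTheory.integral_const_mul,
      MeasureTheory.integral_const_mul] at hle
  · simp only [Pi.add_apply]
    rw [norm_mul, Real.norm_eq_abs, Real.norm_eq_abs]
    by_cases hrd : r ∈ Ioi d
    · rw [indicator_of_mem hrd, abs_mul, mul_left_comm]
      refine le_add_of_nonneg_of_le (by positivity) ?_
      gcongr
      exact (hkM r hr).trans (by gcongr; exact le_abs_self _)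
    · rw [indicator_of_notMem hrd, add_zero]
      gcongr
      exact hρ r ⟨hr, not_lt.1 hrd⟩

theorem tendsto_integral_mul_of_concentrating {ι : Type*} {l : Filter ι} {k : ι → ℝ → ℝ}
    {ρ M : ℝ → ℝ} {w : ι → ℝ} {C : ℝ} (hρ : Tendsto ρ (𝓝[>] 0) (𝓝 0))
    (hk : ∀ᶠ i in l, IntegrableOn (k i) (Ioi 0) ∧ ∫ r in Ioi (0 : ℝ), |k i r| ≤ C)
    (hkM : ∀ i r, 0 < r → |k i r| ≤ w i * M r) (hw₀ : ∀ i, 0 ≤ w i) (hw : Tendsto w l (𝓝 0))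
    (hM : ∀ d, 0 < d → IntegrableOn (fun r => ρ r * M r) (Ioi d)) :
    Tendsto (fun i => ∫ r in Ioi (0 : ℝ), ρ r * k i r) l (𝓝 0) := by
  refine Metric.tendsto_nhds.2 fun ε hε => ?_
  obtain ⟨e, he, heC⟩ : ∃ e > 0, e * C < ε / 2 := by
    refine ⟨ε / (2 * (|C| + 1)), by positivity, ?_⟩
    rw [div_mul_eq_mul_div, div_lt_div_iff₀ (by positivity) two_pos]
    nlinarith [le_abs_self C]
  obtain ⟨d, hd, hρd⟩ := exists_forall_Ioo_abs_sub_lt hρ he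
  have hsmall : Tendsto (fun i => w i * ∫ r in Ioi (d / 2), |ρ r * M r|) l (𝓝 0) := by
    simpa using hw.mul_const _
  filter_upwards [hk, hsmall.eventually_lt_const (half_pos hε)] with i ⟨hki, hkC⟩ hi
  have hle := abs_integral_Ioi_mul_le (half_pos hd).le he.le hki
    (fun r hr => by simpa using (hρd r ⟨hr.1, hr.2.trans_lt (half_lt_self hd)⟩).le)
    (hw₀ i) (hkM i) (hM (d / 2) (half_pos hd))
  rw [dist_zero_right, Real.norm_eq_abs]
  linarith [mul_le_mul_of_nonneg_left hkC he.le]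

end LagIntegrals

namespace IsJumpKernel

variable {a b C c t : ℝ} {E K : ℝ → ℝ → ℝ} {g σ : ℝ → ℝ}

theorem continuous_deriv (hJ : IsJumpKernel a b C E K) {r : ℝ} (hr : 0 < r) :
    Continuous fun x => K x r :=
  (LipschitzWith.of_dist_le' fun x y =>
    (hJ.abs_sub_le x y r hr).trans_eq (mul_right_comm _ _ _)).continuous

theorem abs_deriv_le (hJ : IsJumpKernel a b C E K) (x : ℝ) {r : ℝ} (hr : 0 < r) :
    |K x r| ≤ C * |x| * (r ^ (-1 - a / 2) + r ^ (-1 - b / 2)) := by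
  simpa [hJ.zero_left] using hJ.abs_sub_le x 0 r hr

theorem exists_abs_deriv_comp_sub_le (hJ : IsJumpKernel a b C E K) (ha : 0 ≤ a) (hb : 0 ≤ b)
    (hσ : Tendsto σ (𝓝[>] 0) (𝓝 0)) {x : ℝ} (hx : x ≠ 0) :
    ∃ ε > 0, ∃ A D, ∀ y ∈ Metric.ball x ε, ∀ r, 0 < r →
      |K (y - σ r) r| ≤ A * (r ^ (a - 1) + r ^ (b - 1)) + D := by
  have hC := hJ.nonneg
  obtain ⟨ε, hε, hxε⟩ : ∃ ε > 0, |x| = 3 * ε := ⟨|x| / 3, by positivity, by ring⟩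
  obtain ⟨d, hd, hσd⟩ := exists_forall_Ioo_abs_sub_lt hσ hε
  refine ⟨ε, hε, C * (ε ^ 2)⁻¹, C * ε * (d ^ (-1 - a / 2) + d ^ (-1 - b / 2)),
    fun y (hy : |y - x| < ε) r hr => ?_⟩
  rcases le_or_gt ε |y - σ r| with hyσ | hyσ
  · have hne : y - σ r ≠ 0 := abs_pos.1 (hε.trans_le hyσ)
    have hsq : ε ^ 2 ≤ (y - σ r) ^ 2 := by
      rw [← sq_abs (y - σ r)]
      gcongr
    refine (hJ.abs_le_of_ne _ r hne hr).trans (le_add_of_le_of_nonneg ?_ (by positivity))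
    gcongr
  · have hdr : d ≤ r := le_of_not_gt fun hrd => by
      have hσr := hσd r ⟨hr, hrd⟩
      rw [sub_zero] at hσr
      have hsplit : |x| ≤ |y - x| + |y - σ r| + |σ r| := by
        calc |x| = |(y - σ r) - (y - x) + σ r| := by ring_nf
          _ ≤ |y - x| + |y - σ r| + |σ r| := by
            linarith [abs_add_le ((y - σ r) - (y - x)) (σ r), abs_sub (y - σ r) (y - x)]
      linarith
    refine (hJ.abs_deriv_le _ hr).trans (le_add_of_nonneg_of_le (by positivity) ?_)
    have hra : r ^ (-1 - a / 2) ≤ d ^ (-1 - a / 2) := rpow_le_rpow_of_nonpos hd hdr (by linarith)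
    have hrb : r ^ (-1 - b / 2) ≤ d ^ (-1 - b / 2) := rpow_le_rpow_of_nonpos hd hdr (by linarith)
    gcongr

theorem hasDerivAt_potential (hJ : IsJumpKernel a b C E K) (ha : 0 < a) (hb : 0 < b)
    (hg : IntegrableOn g (Ioc 0 t)) (hg₀ : Tendsto g (𝓝[>] 0) (𝓝 c))
    (hσ : AEMeasurable σ (volume.restrict (Ioc 0 t))) (hσ₀ : Tendsto σ (𝓝[>] 0) (𝓝 0))
    {x : ℝ} (hx : x ≠ 0) :
    HasDerivAt (fun y => ∫ r in Ioc 0 t, g r * E (y - σ r) r)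
      (∫ r in Ioc 0 t, g r * K (x - σ r) r) x := by
  obtain ⟨ε, hε, A, D, hK⟩ := hJ.exists_abs_deriv_comp_sub_le ha.le hb.le hσ₀ hx
  have hE y := aestronglyMeasurable_comp_sub hJ.measurable hσ y
  refine (hasDerivAt_integral_of_dominated_loc_of_deriv_le
    (bound := fun r => |g r| * (A * (r ^ (a - 1) + r ^ (b - 1))) + |g r| * D)
    (Metric.ball_mem_nhds x hε)
    (Eventually.of_forall fun y => hg.aestronglyMeasurable.mul (hE y))
    (integrableOn_mul_of_abs_le_rpow_add_rpow hg hg₀ (by linarith) (by linarith) (hE x)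
      fun r hr => hJ.abs_le _ r hr.1)
    (hg.aestronglyMeasurable.mul (aestronglyMeasurable_comp_sub hJ.measurable_deriv hσ x))
    ((ae_restrict_mem measurableSet_Ioc).mono fun r hr y hy => ?_)
    ((integrableOn_mul_rpow_add_rpow hg hg₀ (by linarith) (by linarith) A).add (hg.abs.mul_const D))
    ((ae_restrict_mem measurableSet_Ioc).mono fun r hr y _ =>
      ((hJ.hasDerivAt (y - σ r) r hr.1).comp_sub_const y (σ r)).const_mul (g r))).2
  rw [norm_mul, Real.norm_eq_abs, Real.norm_eq_abs, ← mul_add]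
  gcongr
  exact hK y hy r hr.1

theorem integrableOn_Ioi_rpow_add_rpow (ha : 0 < a) (hb : 0 < b) {d : ℝ} (hd : 0 < d) :
    IntegrableOn (fun r : ℝ => r ^ (-1 - a / 2) + r ^ (-1 - b / 2)) (Ioi d) :=
  (integrableOn_Ioi_rpow_of_lt (by linarith) hd).add
    (integrableOn_Ioi_rpow_of_lt (by linarith) hd)

theorem integrableOn_Ioi_sub_mul_rpow_add_rpow (ha : 0 < a) (hb : 0 < b)
    (hg : IntegrableOn g (Ioi 0)) (c : ℝ) {d : ℝ} (hd : 0 < d) :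
    IntegrableOn (fun r => (g r - c) * (r ^ (-1 - a / 2) + r ^ (-1 - b / 2))) (Ioi d) := by
  have hM := integrableOn_Ioi_rpow_add_rpow ha hb hd
  simp_rw [sub_mul]
  refine Integrable.sub ?_ (hM.const_mul c)
  refine (hg.mono_set (Ioi_subset_Ioi hd.le)).mul_bdd hM.aestronglyMeasurable
    (c := d ^ (-1 - a / 2) + d ^ (-1 - b / 2))
    ((ae_restrict_mem measurableSet_Ioi).mono fun r (hr : d < r) => ?_)
  have hr₀ := hd.trans hr
  rw [norm_of_nonneg (by positivity)]
  gcongr 1 <;> exact rpow_le_rpow_of_nonpos hd hr.le (by linarith)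

theorem tendsto_integral_Ioi_sub_mul_deriv (hJ : IsJumpKernel a b C E K) (ha : 0 < a) (hb : 0 < b)
    (hg : IntegrableOn g (Ioi 0)) (hg₀ : Tendsto g (𝓝[>] 0) (𝓝 c)) :
    Tendsto (fun x => ∫ r in Ioi (0 : ℝ), (g r - c) * K x r) (𝓝[≠] 0) (𝓝 0) := by
  refine tendsto_integral_mul_of_concentrating (w := fun x => C * |x|) (C := C)
    (M := fun r => r ^ (-1 - a / 2) + r ^ (-1 - b / 2)) (by simpa using hg₀.sub_const c)
    (eventually_mem_nhdsWithin.mono fun x hx => ⟨hJ.integrableOn x hx, hJ.integral_abs_le x hx⟩)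
    (fun x r hr => hJ.abs_deriv_le x hr) (fun x => mul_nonneg hJ.nonneg (abs_nonneg x)) ?_
    (fun d hd => integrableOn_Ioi_sub_mul_rpow_add_rpow ha hb hg c hd)
  have hcont : Continuous fun x : ℝ => C * |x| := by fun_prop
  exact (hcont.tendsto' 0 0 (by simp)).mono_left nhdsWithin_le_nhds

theorem integrableOn_mul_deriv (hJ : IsJumpKernel a b C E K) (ha : 0 < a) (hb : 0 < b)
    (hg : IntegrableOn g (Ioc 0 t)) (hg₀ : Tendsto g (𝓝[>] 0) (𝓝 c)) {x : ℝ} (hx : x ≠ 0) :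
    IntegrableOn (fun r => g r * K x r) (Ioc 0 t) :=
  integrableOn_mul_of_abs_le_rpow_add_rpow hg hg₀ (by linarith) (by linarith)
    hJ.measurable_deriv.of_uncurry_left.aestronglyMeasurable
    fun r hr => hJ.abs_le_of_ne x r hx hr.1

/-- The source of the jump: as `x → 0`, `K x` becomes `L` times the Dirac mass at lag `0`. -/
theorem tendsto_integral_mul_deriv (hJ : IsJumpKernel a b C E K) (ha : 0 < a) (hb : 0 < b)
    (ht : 0 < t) (hg : IntegrableOn g (Ioc 0 t)) (hg₀ : Tendsto g (𝓝[>] 0) (𝓝 c))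
    {l : Filter ℝ} {L : ℝ} (hl : l ≤ 𝓝[≠] 0) (hL : ∀ᶠ x in l, -(x / |x|) / 2 = L) :
    Tendsto (fun x => ∫ r in Ioc 0 t, g r * K x r) l (𝓝 (L * c)) := by
  have hG : IntegrableOn ((Ioc 0 t).indicator g) (Ioi 0) :=
    (hg.integrable_indicator measurableSet_Ioc).integrableOn
  have hG₀ : Tendsto ((Ioc 0 t).indicator g) (𝓝[>] 0) (𝓝 c) :=
    hg₀.congr' <| Filter.mem_of_superset (Ioc_mem_nhdsGT ht) fun r hr =>
      (indicator_of_mem hr g).symm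
  have hsum := ((hJ.tendsto_integral_Ioi_sub_mul_deriv ha hb hG hG₀).mono_left hl).add_const (L * c)
  rw [zero_add] at hsum
  refine hsum.congr' ?_
  filter_upwards [hL, hl self_mem_nhdsWithin] with x hxL hx
  have hind : ∀ r, (Ioc 0 t).indicator g r * K x r = (Ioc 0 t).indicator (fun r => g r * K x r) r :=
    fun r => by rw [indicator_mul_left]
  have hint := hJ.integrableOn_mul_deriv ha hb hg hg₀ hx
  simp_rw [sub_mul, hind]
  rw [MeasureTheory.integral_sub (hint.integrable_indicator measurableSet_Ioc).integrableOn
    ((hJ.integrableOn x hx).const_mul c), setIntegral_indicator measurableSet_Ioc,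
    inter_eq_right.2 Ioc_subset_Ioi_self, MeasureTheory.integral_const_mul,
    hJ.integral_eq x hx, hxL]
  ring

variable {H β : ℝ}

theorem abs_deriv_comp_sub_sub_le (hJ : IsJumpKernel a b C E K)
    (hσβ : ∀ r ∈ Ioc 0 t, |σ r| ≤ H * r ^ β) (x : ℝ) {r : ℝ} (hr : r ∈ Ioc 0 t) :
    |K (x - σ r) r - K x r| ≤ C * H * (r ^ (β + (-1 - a / 2)) + r ^ (β + (-1 - b / 2))) := by
  have hC := hJ.nonneg
  have hr₀ : 0 < r := hr.1
  calc |K (x - σ r) r - K x r|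
      ≤ C * |x - σ r - x| * (r ^ (-1 - a / 2) + r ^ (-1 - b / 2)) := hJ.abs_sub_le _ _ r hr₀
    _ ≤ C * (H * r ^ β) * (r ^ (-1 - a / 2) + r ^ (-1 - b / 2)) := by
        rw [sub_sub_cancel_left, abs_neg]
        gcongr
        exact hσβ r hr
    _ = C * H * (r ^ (β + (-1 - a / 2)) + r ^ (β + (-1 - b / 2))) := by
        rw [rpow_add hr₀, rpow_add hr₀]
        ring

theorem aestronglyMeasurable_deriv_comp_sub_sub (hJ : IsJumpKernel a b C E K)
    (hσ : AEMeasurable σ (volume.restrict (Ioc 0 t))) (x : ℝ) :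
    AEStronglyMeasurable (fun r => K (x - σ r) r - K x r) (volume.restrict (Ioc 0 t)) :=
  (aestronglyMeasurable_comp_sub hJ.measurable_deriv hσ x).sub
    hJ.measurable_deriv.of_uncurry_left.aestronglyMeasurable

theorem tendsto_integral_mul_deriv_sub (hJ : IsJumpKernel a b C E K)
    (hg : IntegrableOn g (Ioc 0 t)) (hg₀ : Tendsto g (𝓝[>] 0) (𝓝 c))
    (hσ : AEMeasurable σ (volume.restrict (Ioc 0 t))) (haβ : a / 2 < β) (hbβ : b / 2 < β)
    (hσβ : ∀ r ∈ Ioc 0 t, |σ r| ≤ H * r ^ β) :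
    Tendsto (fun x => ∫ r in Ioc 0 t, g r * (K (x - σ r) r - K x r)) (𝓝 0)
      (𝓝 (∫ r in Ioc 0 t, g r * K (-σ r) r)) := by
  refine MeasureTheory.tendsto_integral_filter_of_dominated_convergence
    (fun r => |g r| * (C * H * (r ^ (β + (-1 - a / 2)) + r ^ (β + (-1 - b / 2)))))
    (Eventually.of_forall fun x =>
      hg.aestronglyMeasurable.mul (hJ.aestronglyMeasurable_deriv_comp_sub_sub hσ x))
    (Eventually.of_forall fun x => (ae_restrict_mem measurableSet_Ioc).mono fun r hr => ?_)
    (integrableOn_mul_rpow_add_rpow hg hg₀ (u := β + (-1 - a / 2)) (v := β + (-1 - b / 2))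
      (by linarith) (by linarith) (C * H))
    ((ae_restrict_mem measurableSet_Ioc).mono fun r hr => ?_)
  · rw [norm_mul, Real.norm_eq_abs, Real.norm_eq_abs]
    gcongr
    exact hJ.abs_deriv_comp_sub_sub_le hσβ x hr
  · have hK := hJ.continuous_deriv hr.1
    have hcont : Continuous fun x => g r * (K (x - σ r) r - K x r) :=
      continuous_const.mul ((hK.comp (continuous_sub_right (σ r))).sub hK)
    exact hcont.tendsto' 0 _ (by simp [hJ.zero_left])

theorem tendsto_deriv_potential (hJ : IsJumpKernel a b C E K) (ha : 0 < a) (hb : 0 < b)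
    (ht : 0 < t) (hg : IntegrableOn g (Ioc 0 t)) (hg₀ : Tendsto g (𝓝[>] 0) (𝓝 c))
    (hσ : AEMeasurable σ (volume.restrict (Ioc 0 t))) (haβ : a / 2 < β) (hbβ : b / 2 < β)
    (hσβ : ∀ r ∈ Ioc 0 t, |σ r| ≤ H * r ^ β)
    {l : Filter ℝ} {L : ℝ} (hl : l ≤ 𝓝[≠] 0) (hL : ∀ᶠ x in l, -(x / |x|) / 2 = L) :
    Tendsto (deriv fun x => ∫ r in Ioc 0 t, g r * E (x - σ r) r) l
      (𝓝 (L * c + ∫ r in Ioc 0 t, g r * K (-σ r) r)) := by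
  have hσ₀ : Tendsto σ (𝓝[>] 0) (𝓝 0) := by
    have hβ : 0 < β := (half_pos ha).trans haβ
    have hcont : Tendsto (fun r : ℝ => H * r ^ β) (𝓝 0) (𝓝 0) :=
      ((continuous_id.rpow_const fun _ => Or.inr hβ.le).const_mul H).tendsto' 0 0
        (by simp [zero_rpow hβ.ne'])
    exact squeeze_zero_norm' (Filter.mem_of_superset (Ioc_mem_nhdsGT ht) hσβ)
      (hcont.mono_left nhdsWithin_le_nhds)
  refine ((hJ.tendsto_integral_mul_deriv ha hb ht hg hg₀ hl hL).add
    ((hJ.tendsto_integral_mul_deriv_sub hg hg₀ hσ haβ hbβ hσβ).mono_left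
      (hl.trans nhdsWithin_le_nhds))).congr' ?_
  filter_upwards [hl self_mem_nhdsWithin] with x hx
  rw [(hJ.hasDerivAt_potential ha hb hg hg₀ hσ hσ₀ hx).deriv, ← MeasureTheory.integral_add
    (hJ.integrableOn_mul_deriv ha hb hg hg₀ hx)
    (integrableOn_mul_of_abs_le_rpow_add_rpow hg hg₀ (by linarith) (by linarith)
      (hJ.aestronglyMeasurable_deriv_comp_sub_sub hσ x)
      fun r hr => hJ.abs_deriv_comp_sub_sub_le hσβ x hr)]
  simp_rw [← mul_add, add_sub_cancel]

end IsJumpKernel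

/-! ### Moving boundaries -/

theorem tendsto_const_sub_nhdsGT_zero (t : ℝ) : Tendsto (fun r => t - r) (𝓝[>] 0) (𝓝[<] t) := by
  refine tendsto_nhdsWithin_iff.2 ⟨?_, eventually_mem_nhdsWithin.mono fun r => sub_lt_self t⟩
  exact ((continuous_sub_left t).tendsto' 0 t (sub_zero t)).mono_left nhdsWithin_le_nhds

theorem intervalIntegral_eq_setIntegral_const_sub {t : ℝ} (ht : 0 ≤ t) (h : ℝ → ℝ) :
    ∫ τ in (0 : ℝ)..t, h τ = ∫ r in Ioc 0 t, h (t - r) := by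
  rw [← intervalIntegral.integral_of_le ht, intervalIntegral.integral_comp_sub_left h t, sub_self,
    sub_zero]

theorem aemeasurable_comp_const_sub {t : ℝ} {s : ℝ → ℝ}
    (hs : AEMeasurable s (volume.restrict (Ioc 0 t))) :
    AEMeasurable (fun r => s (t - r)) (volume.restrict (Ioc 0 t)) := by
  have hmp := (Measure.measurePreserving_sub_left volume t).restrict_preimage
    (measurableSet_Ioc (a := 0) (b := t))
  rw [Set.preimage_const_sub_Ioc, sub_self, sub_zero, restrict_Ico_eq_restrict_Ioc] at hmp
  exact hs.comp_quasiMeasurePreserving hmp.quasiMeasurePreserving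

theorem IsJumpKernel.tendsto_deriv_layerPotential {a b C t β H L : ℝ} {E K : ℝ → ℝ → ℝ}
    {φ s : ℝ → ℝ} {l : Filter ℝ} (hJ : IsJumpKernel a b C E K) (ha : 0 < a) (hb : 0 < b)
    (ht : 0 < t) (hφ : IntervalIntegrable φ volume 0 t) (hφt : ContinuousWithinAt φ (Iio t) t)
    (hs : AEMeasurable s (volume.restrict (Ioc 0 t))) (haβ : a / 2 < β) (hbβ : b / 2 < β)
    (hsβ : ∀ τ ∈ Ico 0 t, |s t - s τ| ≤ H * (t - τ) ^ β) (hl : l ≤ 𝓝[≠] (s t))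
    (hL : ∀ᶠ x in l, -((x - s t) / |x - s t|) / 2 = L) :
    Tendsto (deriv fun y => ∫ τ in (0 : ℝ)..t, φ τ * E (y - s τ) (t - τ)) l
      (𝓝 (L * φ t + ∫ τ in (0 : ℝ)..t, φ τ * K (s t - s τ) (t - τ))) := by
  have hg : IntegrableOn (fun r => φ (t - r)) (Ioc 0 t) := by
    simpa using (hφ.comp_sub_left t).symm.1
  have hσβ : ∀ r ∈ Ioc 0 t, |s (t - r) - s t| ≤ H * r ^ β := fun r hr => by
    simpa [abs_sub_comm] using hsβ (t - r) ⟨sub_nonneg.2 hr.2, sub_lt_self t hr.1⟩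
  have hl₀ : Tendsto (fun x => x - s t) l (𝓝[≠] 0) := by
    refine tendsto_nhdsWithin_iff.2 ⟨?_, hl (eventually_mem_nhdsWithin.mono fun x => sub_ne_zero.2)⟩
    exact ((continuous_sub_right (s t)).tendsto' (s t) 0 (sub_self _)).mono_left
      (hl.trans nhdsWithin_le_nhds)
  have hlim := (hJ.tendsto_deriv_potential ha hb ht hg
    (hφt.tendsto.comp (tendsto_const_sub_nhdsGT_zero t))
    ((aemeasurable_comp_const_sub hs).sub_const (s t)) haβ hbβ hσβ hl₀
    (eventually_map.2 hL)).comp tendsto_map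
  have hderiv : (deriv fun y => ∫ τ in (0 : ℝ)..t, φ τ * E (y - s τ) (t - τ)) =
      (deriv fun x => ∫ r in Ioc 0 t, φ (t - r) * E (x - (s (t - r) - s t)) r) ∘ (· - s t) := by
    funext x
    simp only [Function.comp_apply, ← deriv_comp_sub_const]
    simp [intervalIntegral_eq_setIntegral_const_sub ht.le]
  rw [hderiv, intervalIntegral_eq_setIntegral_const_sub ht.le]
  simpa using hlim

theorem exists_isJumpKernel_kerE {n : ℕ} {α lam : Fin (n + 1) → ℝ} {a b : ℝ} (hb : 0 < b)
    (ha : a < 1) (hαb : ∀ j, b ≤ α j) (hαa : ∀ j, α j ≤ a) (hlam : ∀ j, 0 < lam j) :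
    ∃ C E K, IsJumpKernel a b C E K ∧ (∀ x t, 0 < t → kerE n α lam x t = E x t) ∧
      ∀ x t, 0 < t → kerEx n α lam x t = K x t := by
  obtain ⟨C, f, hf, hfS⟩ := exists_isSubordinatorFamily_Sconv hb ha n α lam hαb hαa hlam
  have hE x t (ht : 0 < t) : kerE n α lam x t = subordE f x t :=
    kerE_eq_subordE (fun p hp => hfS p t hp ht) x
  refine ⟨_, _, _, hf.isJumpKernel, hE, fun x t ht => ?_⟩
  rw [kerEx, funext fun y => hE y t ht]
  exact (hf.isJumpKernel.hasDerivAt x t ht).deriv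

theorem tendsto_deriv_layerPotential_kerE {n : ℕ} {α lam : Fin (n + 1) → ℝ} {a : ℝ}
    (hα : ∀ j, 0 < α j) (hαa : ∀ j, α j ≤ a) (ha : a < 1) (hlam : ∀ j, 0 < lam j)
    {φ s : ℝ → ℝ} {t β H L : ℝ} {l : Filter ℝ} (ht : 0 < t)
    (hφ : IntervalIntegrable φ volume 0 t) (hφt : ContinuousWithinAt φ (Iio t) t)
    (hs : AEMeasurable s (volume.restrict (Ioc 0 t))) (hβ : a / 2 < β)
    (hsβ : ∀ τ ∈ Ico 0 t, |s t - s τ| ≤ H * (t - τ) ^ β) (hl : l ≤ 𝓝[≠] (s t))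
    (hL : ∀ᶠ x in l, -((x - s t) / |x - s t|) / 2 = L) :
    Tendsto (deriv fun y => ∫ τ in (0 : ℝ)..t, φ τ * kerE n α lam (y - s τ) (t - τ)) l
      (𝓝 (L * φ t + ∫ τ in (0 : ℝ)..t, φ τ * kerEx n α lam (s t - s τ) (t - τ))) := by
  obtain ⟨i, hi⟩ := Finite.exists_min α
  obtain ⟨C, E, K, hJ, hE, hK⟩ := exists_isJumpKernel_kerE (hα i) ha hi hαa hlam
  have hlag {F G : ℝ → ℝ → ℝ} (hFG : ∀ x r, 0 < r → F x r = G x r) (y : ℝ) :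
      ∫ τ in (0 : ℝ)..t, φ τ * F (y - s τ) (t - τ) = ∫ τ in (0 : ℝ)..t, φ τ * G (y - s τ) (t - τ) :=
    integral_congr_Ioo_of_le ht.le fun τ hτ => by simp only [hFG _ _ (sub_pos.2 hτ.2)]
  simp_rw [hlag hE, hlag hK]
  exact hJ.tendsto_deriv_layerPotential ((hα i).trans_le (hαa i)) (hα i) ht hφ hφt hs hβ
    (by linarith [hαa i]) hsβ hl hL

theorem jump_relation_E_general {n : ℕ} {α lam : Fin (n + 1) → ℝ} {a : ℝ}
    (hα : ∀ j, 0 < α j) (hαa : ∀ j, α j ≤ a) (ha : a < 1) (hlam : ∀ j, 0 < lam j)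
    {φ s : ℝ → ℝ} {t β H : ℝ} (ht : 0 < t)
    (hφ : IntervalIntegrable φ volume 0 t) (hφt : ContinuousWithinAt φ (Iio t) t)
    (hs : AEMeasurable s (volume.restrict (Ioc 0 t))) (hβ : a / 2 < β)
    (hsβ : ∀ τ ∈ Ico 0 t, |s t - s τ| ≤ H * (t - τ) ^ β) :
    Tendsto (deriv fun y => ∫ τ in (0 : ℝ)..t, φ τ * kerE n α lam (y - s τ) (t - τ)) (𝓝[<] (s t))
      (𝓝 (1 / 2 * φ t + ∫ τ in (0 : ℝ)..t, φ τ * kerEx n α lam (s t - s τ) (t - τ))) ∧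
    Tendsto (deriv fun y => ∫ τ in (0 : ℝ)..t, φ τ * kerE n α lam (y - s τ) (t - τ)) (𝓝[>] (s t))
      (𝓝 (-(1 / 2) * φ t + ∫ τ in (0 : ℝ)..t, φ τ * kerEx n α lam (s t - s τ) (t - τ))) := by
  constructor <;> refine tendsto_deriv_layerPotential_kerE hα hαa ha hlam ht hφ hφt hs hβ hsβ
    (nhdsWithin_mono _ fun x hx => ?_) (eventually_mem_nhdsWithin.mono fun x hx => ?_)
  · exact ne_of_lt hx
  · have hx₀ : x - s t < 0 := sub_neg.2 hx
    rw [abs_of_neg hx₀, div_neg, div_self hx₀.ne, neg_neg]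
  · exact ne_of_gt hx
  · have hx₀ : 0 < x - s t := sub_pos.2 hx
    rw [abs_of_pos hx₀, div_self hx₀.ne', neg_div]

section SingularDensity

variable {φ ψ : ℝ → ℝ} {a T : ℝ}

theorem eq_rpow_sub_one_mul_of_eq_rpow_one_sub_mul
    (hψ : ∀ τ ∈ Ioc 0 T, ψ τ = τ ^ (1 - a) * φ τ) {τ : ℝ} (hτ : τ ∈ Ioc 0 T) :
    φ τ = τ ^ (a - 1) * ψ τ := by
  rw [hψ τ hτ, ← mul_assoc, ← rpow_add hτ.1]
  simp

theorem intervalIntegrable_of_continuousOn_rpow_mul (ha : 0 < a) (hψc : ContinuousOn ψ (Icc 0 T))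
    (hψ : ∀ τ ∈ Ioc 0 T, ψ τ = τ ^ (1 - a) * φ τ) {t : ℝ} (ht : t ∈ Ioc 0 T) :
    IntervalIntegrable φ volume 0 t := by
  have hψt : ContinuousOn ψ (uIcc 0 t) := by
    rw [uIcc_of_le ht.1.le]
    exact hψc.mono (Icc_subset_Icc_right ht.2)
  have hpow : IntervalIntegrable (fun τ : ℝ => τ ^ (a - 1)) volume 0 t :=
    intervalIntegrable_rpow' (by linarith)
  refine (hpow.mul_continuousOn hψt).congr fun τ hτ => ?_
  rw [uIoc_of_le ht.1.le] at hτ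
  exact (eq_rpow_sub_one_mul_of_eq_rpow_one_sub_mul hψ ⟨hτ.1, hτ.2.trans ht.2⟩).symm

theorem continuousOn_of_continuousOn_rpow_mul (hψc : ContinuousOn ψ (Icc 0 T))
    (hψ : ∀ τ ∈ Ioc 0 T, ψ τ = τ ^ (1 - a) * φ τ) : ContinuousOn φ (Ioc 0 T) :=
  ((continuousOn_id.rpow_const fun _ hτ => Or.inl hτ.1.ne').mul
    (hψc.mono Ioc_subset_Icc_self)).congr fun _ => eq_rpow_sub_one_mul_of_eq_rpow_one_sub_mul hψ

theorem continuousWithinAt_Iio_of_continuousOn_rpow_mul (hψc : ContinuousOn ψ (Icc 0 T))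
    (hψ : ∀ τ ∈ Ioc 0 T, ψ τ = τ ^ (1 - a) * φ τ) {t : ℝ} (ht : t ∈ Ioc 0 T) :
    ContinuousWithinAt φ (Iio t) t :=
  (continuousOn_of_continuousOn_rpow_mul hψc hψ t ht).mono_of_mem_nhdsWithin <|
    Filter.mem_of_superset (Ioc_mem_nhdsLT ht.1) (Ioc_subset_Ioc_right ht.2)

end SingularDensity

theorem holderOnWith_of_abs_sub_le_rpow {s : ℝ → ℝ} {S : Set ℝ} {β : NNReal}
    (hs : ∀ t ∈ S, ∀ τ ∈ S, |s t - s τ| ≤ |t - τ| ^ (β : ℝ)) : HolderOnWith 1 β s S := by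
  intro t ht τ hτ
  rw [ENNReal.coe_one, one_mul, edist_dist, edist_dist,
    ENNReal.ofReal_rpow_of_nonneg dist_nonneg β.coe_nonneg]
  exact ENNReal.ofReal_le_ofReal (hs t ht τ hτ)

theorem aemeasurable_restrict_of_abs_sub_le_rpow {s : ℝ → ℝ} {S : Set ℝ} {β : ℝ} (hβ : 0 < β)
    (hS : MeasurableSet S) (hs : ∀ t ∈ S, ∀ τ ∈ S, |s t - s τ| ≤ |t - τ| ^ β) :
    AEMeasurable s (volume.restrict S) :=
  ((holderOnWith_of_abs_sub_le_rpow (β := ⟨β, hβ.le⟩) hs).continuousOn hβ).aemeasurable hS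

/-- Jump relation for the derivative of the `E`-potential across the moving
boundary `x = s(t)`: as `x → s(t)⁻` the derivative of the potential tends to
`(1/2)φ(t) + ∫₀ᵗ φ(τ) E_x(s(t)-s(τ), t-τ) dτ`, and as `x → s(t)⁺` it tends to
`-(1/2)φ(t) + ∫₀ᵗ φ(τ) E_x(s(t)-s(τ), t-τ) dτ`. -/
theorem jump_relation_E
    (m : ℕ) (α lam : Fin (m + 1) → ℝ)
    (hmono : StrictMono α) (hpos : ∀ j, 0 < α j) (hlt1 : ∀ j, α j < 1)
    (hlam : ∀ j, 0 < lam j)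
    (T : ℝ) (hT : 0 < T) (φ s : ℝ → ℝ)
    (hφ : ∃ ψ : ℝ → ℝ, ContinuousOn ψ (Set.Icc 0 T) ∧
      ∀ t ∈ Set.Ioc (0:ℝ) T, ψ t = t ^ (1 - α (Fin.last m)) * φ t)
    (β : ℝ) (hβ : α (Fin.last m) / 2 < β)
    (hs : ∀ t ∈ Set.Icc (0:ℝ) T, ∀ τ ∈ Set.Icc (0:ℝ) T, |s t - s τ| ≤ |t - τ| ^ β)
    (t : ℝ) (ht : t ∈ Set.Ioc (0:ℝ) T) :
    Tendsto
      (fun x => deriv (fun y => ∫ τ in (0:ℝ)..t, φ τ * kerE m α lam (y - s τ) (t - τ)) x)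
      (𝓝[<] (s t))
      (𝓝 ((1/2) * φ t + ∫ τ in (0:ℝ)..t, φ τ * kerEx m α lam (s t - s τ) (t - τ))) ∧
    Tendsto
      (fun x => deriv (fun y => ∫ τ in (0:ℝ)..t, φ τ * kerE m α lam (y - s τ) (t - τ)) x)
      (𝓝[>] (s t))
      (𝓝 (-(1/2) * φ t + ∫ τ in (0:ℝ)..t, φ τ * kerEx m α lam (s t - s τ) (t - τ))) := by
  obtain ⟨ψ, hψc, hψ⟩ := hφ
  have hsm : AEMeasurable s (volume.restrict (Icc 0 T)) :=
    aemeasurable_restrict_of_abs_sub_le_rpow ((half_pos (hpos _)).trans hβ) measurableSet_Icc hs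
  refine jump_relation_E_general (H := 1) hpos (fun j => hmono.monotone (Fin.le_last j)) (hlt1 _)
    hlam ht.1 (intervalIntegrable_of_continuousOn_rpow_mul (hpos _) hψc hψ ht)
    (continuousWithinAt_Iio_of_continuousOn_rpow_mul hψc hψ ht)
    (hsm.mono_set (Ioc_subset_Icc_self.trans (Icc_subset_Icc_right ht.2))) hβ fun τ hτ => ?_
  simpa [abs_of_pos (sub_pos.2 hτ.2)] using
    hs t (Ioc_subset_Icc_self ht) τ ⟨hτ.1, hτ.2.le.trans ht.2⟩
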